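/- arXiv:1702.00914 — 4 statements merged into one kernel-verified Lean document; each statement's English description precedes it below -/
import Mathlib

section
/- Let G be a finite simple 2K2-free graph with maximum degree Δ(G) ≥ 5 whose clique number satisfies ω(G) ≤ Δ(G) − 1. Then G admits a proper vertex coloring with Δ(G) − 1 colors, i.e., χ(G) ≤ Δ(G) − 1. -/
/-- A simple graph is `2K2`-free if it has no four distinct vertices `a b c d` with
`ab` and `cd` edges and none of `ac, ad, bc, bd` an edge. -/
def TwoK2Free {V : Type*} (G : SimpleGraph V) : Prop :=
  ¬ ∃ a b c d : V, a ≠ b ∧ a ≠ c ∧ a ≠ d ∧ b ≠ c ∧ b ≠ d ∧ c ≠ d ∧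
      G.Adj a b ∧ G.Adj c d ∧ ¬ G.Adj a c ∧ ¬ G.Adj a d ∧ ¬ G.Adj b c ∧ ¬ G.Adj b d

namespace BK

/-- `if c then t else e`, by the recursor of `Bool` (cheap for the kernel). -/
noncomputable abbrev cnd {α : Type} (c : Bool) (t e : α) : α := @Bool.rec (fun _ => α) e t c

/-- A listed vertex: its bit, the mask of its listed neighbours, the number of these. -/
structure Ent where
  bit : ℕ
  adj : ℕ
  deg : ℕ

abbrev disj (a b : ℕ) : Bool := Nat.beq (Nat.land a b) 0

noncomputable def indepM (R : ℕ) (l : List Ent) : Bool :=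
  @List.rec Ent (fun _ => Bool) true
    (fun p _ ih => cnd (disj R p.bit) ih (cnd (disj p.adj R) ih false)) l

noncomputable def joinM (X Y : ℕ) (l : List Ent) : Bool :=
  @List.rec Ent (fun _ => Bool) true
    (fun p _ ih => cnd (disj X p.bit) ih (cnd (Nat.beq (Nat.land p.adj Y) Y) ih false)) l

noncomputable def fullM (l : List Ent) : ℕ :=
  @List.rec Ent (fun _ => ℕ) 0 (fun p _ ih => cnd (Nat.ble 5 p.deg) (Nat.add ih p.bit) ih) l

noncomputable def cnt (m : ℕ) (l : List Ent) : ℕ :=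
  @List.rec Ent (fun _ => ℕ) 0 (fun p _ ih => cnd (disj m p.bit) ih (Nat.add ih 1)) l

noncomputable def updA (m b : ℕ) (l : List Ent) : List Ent :=
  @List.rec Ent (fun _ => List Ent) []
    (fun p _ ih => List.cons
      (cnd (disj m p.bit) p ⟨p.bit, Nat.add p.adj b, Nat.add p.deg 1⟩) ih) l

noncomputable def extA (m b : ℕ) (l : List Ent) : List Ent :=
  List.cons ⟨b, m, cnt m l⟩ (updA m b l)

noncomputable def extL (adj : List Ent) (m b F : ℕ) (L : List ℕ) : List ℕ :=
  @List.rec ℕ (fun _ => List ℕ) [] (fun x _ r =>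
    cnd (cnd (disj (Nat.add x b) F) (indepM (Nat.xor (Nat.pred b) (Nat.lor m x)) adj) false)
      (List.cons (Nat.add x b)
        (cnd (cnd (disj x F)
          (joinM (Nat.xor x (Nat.land x m)) (Nat.xor m (Nat.land x m)) adj) false)
          (List.cons x r) r))
      (cnd (cnd (disj x F)
          (joinM (Nat.xor x (Nat.land x m)) (Nat.xor m (Nat.land x m)) adj) false)
          (List.cons x r) r)) L

noncomputable def lowB (o : ℕ) (l : List Ent) : Bool :=
  @List.rec Ent (fun _ => Bool) false
    (fun p _ ih => cnd (Nat.ble 4 p.deg) ih (cnd (disj o p.bit) true ih)) l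

noncomputable def orL (L : List ℕ) : ℕ :=
  @List.rec ℕ (fun _ => ℕ) 0 (fun x _ ih => Nat.lor x ih) L

noncomputable def col (l : List Ent) : ℕ → ℕ → ℕ → ℕ → Bool :=
  @List.rec Ent (fun _ => ℕ → ℕ → ℕ → ℕ → Bool) (fun _ _ _ _ => true) (fun p _ ih A B C D =>
    cnd (cnd (disj p.adj A) (ih (Nat.lor A p.bit) B C D) false) true
    (cnd (Nat.beq A 0) false
    (cnd (cnd (disj p.adj B) (ih A (Nat.lor B p.bit) C D) false) true
    (cnd (Nat.beq B 0) false
    (cnd (cnd (disj p.adj C) (ih A B (Nat.lor C p.bit) D) false) true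
    (cnd (Nat.beq C 0) false
    (cnd (disj p.adj D) (ih A B C (Nat.lor D p.bit)) false))))))) l

/-- Exhaustive search: `b` is the next free bit, `adj` the listed vertices, `L` the masks which
a vertex that is not yet listed may have. -/
noncomputable def search (fuel : ℕ) : ℕ → List Ent → List ℕ → Bool :=
  @Nat.rec (fun _ => ℕ → List Ent → List ℕ → Bool) (fun _ _ _ => false) (fun _ ih b adj L =>
    cnd (lowB (orL L) adj) true
    (@List.rec ℕ (fun _ => Bool) (col adj 0 0 0 0)
      (fun m L' _ =>
        cnd (cnd (Nat.ble 6 (cnt m adj)) true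
            (ih (Nat.mul 2 b) (extA m b adj) (extL adj m b (fullM (extA m b adj)) L)))
          (ih b adj L') false) L)) fuel

set_option maxRecDepth 100000 in
theorem search_K4 : search 60 16 [⟨8,7,3⟩,⟨4,11,3⟩,⟨2,13,3⟩,⟨1,14,3⟩]
    [14,13,11,7,12,10,9,6,5,3,8,4,2,1,0] = true := by decide +kernel

set_option maxRecDepth 100000 in
theorem search_diamond : search 60 16 [⟨8,6,2⟩,⟨4,11,3⟩,⟨2,13,3⟩,⟨1,6,2⟩]
    [13,12,5,4,6,11,10,9,3,2,1,8,0] = true := by decide +kernel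

set_option maxRecDepth 100000 in
theorem search_triangle : search 60 8 [⟨4,3,2⟩,⟨2,5,2⟩,⟨1,6,2⟩] [4,2,1,0] = true := by
  decide +kernel

section Sound

variable {V : Type*}

/-- The mask of a predicate on a list of vertices; the head has the highest bit. -/
def maskP (p : V → Bool) : List V → ℕ
  | [] => 0
  | w :: ws => maskP p ws + (if p w then 2 ^ ws.length else 0)

theorem maskP_lt (p : V → Bool) (vs : List V) : maskP p vs < 2 ^ vs.length := by
  induction vs with
  | nil => simp [maskP]
  | cons w ws ih =>
    simp only [maskP, List.length_cons, pow_succ]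
    split_ifs <;> omega

theorem testBit_maskP_cons (p : V → Bool) (w : V) (ws : List V) (i : ℕ) :
    (maskP p (w :: ws)).testBit i = if i = ws.length then p w else (maskP p ws).testBit i := by
  have hlt := maskP_lt p ws
  simp only [maskP]
  by_cases hp : p w = true
  · simp only [hp, if_true]
    rw [add_comm]
    split_ifs with h
    · subst h
      rw [Nat.testBit_two_pow_add_eq, Nat.testBit_lt_two_pow hlt]; rfl
    · rcases lt_or_gt_of_ne h with h | h
      · rw [Nat.testBit_two_pow_add_gt h]
      · rw [Nat.testBit_lt_two_pow, Nat.testBit_lt_two_pow]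
        · exact hlt.trans (Nat.pow_lt_pow_right (by norm_num) h)
        · have : 2 ^ (ws.length + 1) ≤ 2 ^ i := Nat.pow_le_pow_right (by norm_num) h
          rw [pow_succ] at this
          omega
  · simp only [Bool.not_eq_true] at hp
    simp only [hp, Bool.false_eq_true, if_false, add_zero]
    split_ifs with h
    · subst h
      exact Nat.testBit_lt_two_pow hlt
    · rfl

theorem testBit_maskP (p : V → Bool) (vs : List V) (i : ℕ) :
    (maskP p vs).testBit i = (vs.reverse[i]?.map p).getD false := by
  induction vs with
  | nil => simp [maskP]
  | cons w ws ih =>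
    rw [testBit_maskP_cons, ih, List.reverse_cons]
    split_ifs with h
    · subst h; simp
    · rcases lt_or_gt_of_ne h with h | h
      · rw [List.getElem?_append_left (by simpa using h)]
      · rw [List.getElem?_eq_none (by simp; omega), List.getElem?_eq_none (by simp; omega)]

theorem maskP_land (p q : V → Bool) (vs : List V) :
    Nat.land (maskP p vs) (maskP q vs) = maskP (fun w => p w && q w) vs := by
  change maskP p vs &&& maskP q vs = _
  apply Nat.eq_of_testBit_eq
  intro i
  rw [Nat.testBit_and]
  simp only [testBit_maskP]
  cases vs.reverse[i]? <;> simp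

theorem maskP_lor (p q : V → Bool) (vs : List V) :
    Nat.lor (maskP p vs) (maskP q vs) = maskP (fun w => p w || q w) vs := by
  change maskP p vs ||| maskP q vs = _
  apply Nat.eq_of_testBit_eq
  intro i
  rw [Nat.testBit_or]
  simp only [testBit_maskP]
  cases vs.reverse[i]? <;> simp

theorem maskP_xor (p q : V → Bool) (vs : List V) :
    Nat.xor (maskP p vs) (maskP q vs) = maskP (fun w => p w ^^ q w) vs := by
  change maskP p vs ^^^ maskP q vs = _
  apply Nat.eq_of_testBit_eq
  intro i
  rw [Nat.testBit_xor]
  simp only [testBit_maskP]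
  cases vs.reverse[i]? <;> simp

theorem maskP_true (vs : List V) : maskP (fun _ => true) vs = Nat.pred (2 ^ vs.length) := by
  induction vs with
  | nil => simp [maskP]
  | cons w ws ih =>
    have : 0 < 2 ^ ws.length := by positivity
    simp only [maskP, ih, if_true, List.length_cons, pow_succ, Nat.pred_eq_sub_one]
    omega

theorem maskP_congr {p q : V → Bool} {vs : List V} (h : ∀ w ∈ vs, p w = q w) :
    maskP p vs = maskP q vs := by
  induction vs with
  | nil => rfl
  | cons w ws ih =>
    simp only [maskP]
    rw [ih (fun x hx => h x (List.mem_cons_of_mem _ hx)), h w (List.mem_cons_self)]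

theorem maskP_eq_zero {p : V → Bool} {vs : List V} :
    maskP p vs = 0 ↔ ∀ w ∈ vs, p w = false := by
  induction vs with
  | nil => simp [maskP]
  | cons w ws ih =>
    simp only [maskP, Nat.add_eq_zero_iff, ih, List.mem_cons, forall_eq_or_imp]
    cases p w <;> simp

theorem maskP_inj {p q : V → Bool} {vs : List V} (h : maskP p vs = maskP q vs) :
    ∀ w ∈ vs, p w = q w := by
  have := maskP_xor p q vs
  rw [h] at this
  have h0 : Nat.xor (maskP q vs) (maskP q vs) = 0 := Nat.xor_self _
  rw [h0] at this
  intro w hw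
  have := maskP_eq_zero.1 this.symm w hw
  simpa using this

theorem disj_maskP {p q : V → Bool} {vs : List V} :
    disj (maskP p vs) (maskP q vs) = true ↔ ∀ w ∈ vs, p w = true → q w = false := by
  rw [disj, Nat.beq_eq, maskP_land, maskP_eq_zero]
  refine forall_congr' fun w => forall_congr' fun _ => ?_
  cases p w <;> simp

theorem disj_bit {m i : ℕ} : disj m (2 ^ i) = !(m.testBit i) := by
  rw [disj]
  change Nat.beq (m &&& 2 ^ i) 0 = _
  rw [Nat.and_two_pow]
  cases m.testBit i
  · simp
  · have : 0 < 2 ^ i := by positivity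
    simp only [Bool.toNat_true, one_mul, Bool.not_true]
    rw [Bool.eq_false_iff]
    intro h
    rw [Nat.beq_eq] at h
    omega

theorem testBit_suffix (p : V → Bool) {vs : List V} {w : V} {ws : List V}
    (h : (w :: ws) <:+ vs) : (maskP p vs).testBit ws.length = p w := by
  obtain ⟨pre, rfl⟩ := h
  rw [testBit_maskP]
  simp

theorem disj_suffix (p : V → Bool) {vs : List V} {w : V} {ws : List V}
    (h : (w :: ws) <:+ vs) : disj (maskP p vs) (2 ^ ws.length) = !(p w) := by
  rw [disj_bit, testBit_suffix p h]

end Sound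

section Sound2

set_option linter.unusedSectionVars false

variable {V : Type*} [DecidableEq V] (A : V → V → Bool)

/-- Entries of the vertices `ws` with respect to the listed vertices `vs`. -/
def encAux (vs : List V) : List V → List Ent
  | [] => []
  | w :: ws => ⟨2 ^ ws.length, maskP (A w) vs, vs.countP (A w)⟩ :: encAux vs ws

theorem cnt_enc (p : V → Bool) (vs : List V) (ws : List V) (h : ws <:+ vs) :
    cnt (maskP p vs) (encAux A vs ws) = ws.countP p := by
  induction ws with
  | nil => rfl
  | cons w ws ih =>
    have ih := ih ((List.suffix_cons w ws).trans h)
    have e : cnt (maskP p vs) (encAux A vs (w :: ws)) =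
      cnd (disj (maskP p vs) (2 ^ ws.length)) (cnt (maskP p vs) (encAux A vs ws))
        (Nat.add (cnt (maskP p vs) (encAux A vs ws)) 1) := rfl
    rw [e, disj_suffix p h, ih, List.countP_cons]
    cases p w <;> rfl

theorem updA_enc (u : V) (vs : List V) (hs : ∀ x y, A x y = A y x) (ws : List V) (h : ws <:+ vs) :
    updA (maskP (A u) vs) (2 ^ vs.length) (encAux A vs ws) = encAux A (u :: vs) ws := by
  induction ws with
  | nil => rfl
  | cons w ws ih =>
    have ih := ih ((List.suffix_cons w ws).trans h)
    have e : updA (maskP (A u) vs) (2 ^ vs.length) (encAux A vs (w :: ws)) =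
      (cnd (disj (maskP (A u) vs) (2 ^ ws.length)) ⟨2 ^ ws.length, maskP (A w) vs, vs.countP (A w)⟩
        ⟨2 ^ ws.length, Nat.add (maskP (A w) vs) (2 ^ vs.length), Nat.add (vs.countP (A w)) 1⟩) ::
        updA (maskP (A u) vs) (2 ^ vs.length) (encAux A vs ws) := rfl
    rw [e, ih, disj_suffix (A u) h, hs u w]
    simp only [encAux, maskP, List.countP_cons]
    cases A w u <;> simp [cnd]

theorem extA_enc (u : V) (vs : List V) (hs : ∀ x y, A x y = A y x) (hi : ∀ x, A x x = false) :
    extA (maskP (A u) vs) (2 ^ vs.length) (encAux A vs vs) = encAux A (u :: vs) (u :: vs) := by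
  rw [extA, updA_enc A u vs hs vs List.suffix_rfl, cnt_enc A (A u) vs vs List.suffix_rfl]
  simp [encAux, maskP, List.countP_cons, hi]

theorem fullM_enc (vs ws : List V) :
    fullM (encAux A vs ws) = maskP (fun w => Nat.ble 5 (vs.countP (A w))) ws := by
  induction ws with
  | nil => rfl
  | cons w ws ih =>
    have e : fullM (encAux A vs (w :: ws)) = cnd (Nat.ble 5 (vs.countP (A w)))
      (Nat.add (fullM (encAux A vs ws)) (2 ^ ws.length)) (fullM (encAux A vs ws)) := rfl
    rw [e, ih, maskP]
    cases Nat.ble 5 (vs.countP (A w)) <;> simp [cnd]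

theorem indepM_enc (r : V → Bool) (vs ws : List V) (h : ws <:+ vs)
    (H : ∀ w ∈ vs, r w = true → ∀ x ∈ vs, A w x = true → r x = false) :
    indepM (maskP r vs) (encAux A vs ws) = true := by
  induction ws with
  | nil => rfl
  | cons w ws ih =>
    have ih := ih ((List.suffix_cons w ws).trans h)
    have e : indepM (maskP r vs) (encAux A vs (w :: ws)) =
      cnd (disj (maskP r vs) (2 ^ ws.length)) (indepM (maskP r vs) (encAux A vs ws))
        (cnd (disj (maskP (A w) vs) (maskP r vs)) (indepM (maskP r vs) (encAux A vs ws)) false) :=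
      rfl
    rw [e, ih, disj_suffix r h]
    cases hr : r w
    · rfl
    · rw [disj_maskP.2 (H w (h.subset (by simp)) hr)]; rfl

theorem joinM_enc (p q : V → Bool) (vs ws : List V) (h : ws <:+ vs)
    (H : ∀ w ∈ vs, p w = true → ∀ x ∈ vs, q x = true → A w x = true) :
    joinM (maskP p vs) (maskP q vs) (encAux A vs ws) = true := by
  induction ws with
  | nil => rfl
  | cons w ws ih =>
    have ih := ih ((List.suffix_cons w ws).trans h)
    have e : joinM (maskP p vs) (maskP q vs) (encAux A vs (w :: ws)) =
      cnd (disj (maskP p vs) (2 ^ ws.length)) (joinM (maskP p vs) (maskP q vs) (encAux A vs ws))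
        (cnd (Nat.beq (Nat.land (maskP (A w) vs) (maskP q vs)) (maskP q vs))
          (joinM (maskP p vs) (maskP q vs) (encAux A vs ws)) false) := rfl
    rw [e, ih, disj_suffix p h]
    cases hr : p w
    · rfl
    · have : Nat.beq (Nat.land (maskP (A w) vs) (maskP q vs)) (maskP q vs) = true := by
        rw [Nat.beq_eq, maskP_land]
        apply maskP_congr
        intro x hx
        cases hq : q x
        · simp
        · simp [H w (h.subset (by simp)) hr x hx hq]
      rw [this]; rfl

theorem bit_eq (pre : List V) (w : V) (ws : List V) (hn : (pre ++ w :: ws).Nodup) :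
    2 ^ ws.length = maskP (fun x => decide (x = w)) (pre ++ w :: ws) := by
  induction pre with
  | nil =>
    have : maskP (fun x => decide (x = w)) ws = 0 := by
      rw [maskP_eq_zero]
      intro x hx
      simp only [List.nil_append, List.nodup_cons] at hn
      have : x ≠ w := by rintro rfl; exact hn.1 hx
      simp [this]
    simp [maskP, this]
  | cons a pre ih =>
    simp only [List.cons_append, List.nodup_cons] at hn
    have : a ≠ w := by rintro rfl; exact hn.1 (by simp)
    rw [ih hn.2, List.cons_append, maskP]
    simp [this]

theorem bit_suffix {w : V} {ws vs : List V} (h : (w :: ws) <:+ vs) (hn : vs.Nodup) :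
    2 ^ ws.length = maskP (fun x => decide (x = w)) vs := by
  obtain ⟨pre, rfl⟩ := h
  exact bit_eq pre w ws hn

theorem col_step (vs : List V) (hn : vs.Nodup) (hs : ∀ x y, A x y = A y x)
    (hi : ∀ x, A x x = false) (w : V) (ws : List V) (h : (w :: ws) <:+ vs)
    (P P' : Fin 4 → V → Bool) (k : Fin 4)
    (hP : ∀ j x, P' j x = (P j x || (decide (j = k) && decide (x = w))))
    (hd : disj (maskP (A w) vs) (maskP (P k) vs) = true)
    (hc : ∃ c : V → Fin 4, ∀ w ∈ ws, (∀ x ∈ vs, A w x = true → P' (c w) x = false) ∧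
      ∀ x ∈ ws, A w x = true → c w ≠ c x) :
    ∃ c : V → Fin 4, ∀ v ∈ w :: ws, (∀ x ∈ vs, A v x = true → P (c v) x = false) ∧
      ∀ x ∈ w :: ws, A v x = true → c v ≠ c x := by
  obtain ⟨c, hc⟩ := hc
  have hw : w ∉ ws := by
    have := h.sublist.nodup hn
    simp only [List.nodup_cons] at this
    exact this.1
  have hwv : w ∈ vs := h.subset (by simp)
  have hne : ∀ x ∈ ws, x ≠ w := by rintro x hx rfl; exact hw hx
  have key : ∀ x ∈ ws, A x w = true → c x ≠ k := by
    intro x hx hA hk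
    have := (hc x hx).1 w hwv hA
    rw [hP] at this
    simp [hk] at this
  refine ⟨Function.update c w k, ?_⟩
  intro v hv
  rcases List.mem_cons.1 hv with rfl | hv'
  · simp only [Function.update_self]
    refine ⟨fun x hx hA => disj_maskP.1 hd x hx hA, ?_⟩
    intro x hx hA
    rcases List.mem_cons.1 hx with rfl | hx
    · rw [hi] at hA; cases hA
    · rw [Function.update_of_ne (hne x hx)]
      rw [hs] at hA
      exact (key x hx hA).symm
  · rw [Function.update_of_ne (hne v hv')]
    refine ⟨fun x hx hA => ?_, ?_⟩
    · have := (hc v hv').1 x hx hA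
      rw [hP] at this
      rw [Bool.or_eq_false_iff] at this
      exact this.1
    intro x hx hA
    rcases List.mem_cons.1 hx with rfl | hx
    · rw [Function.update_self]
      exact key v hv' hA
    · rw [Function.update_of_ne (hne x hx)]
      exact (hc v hv').2 x hx hA

theorem cnd_tt {c : Bool} {x : Bool} (h : cnd c x false = true) : c = true ∧ x = true := by
  cases c
  · cases h
  · exact ⟨rfl, h⟩

theorem cnd_or {c : Bool} {x : Bool} (h : cnd c true x = true) : c = true ∨ x = true := by
  cases c
  · exact Or.inr h
  · exact Or.inl rfl

theorem cnd_ff {c : Bool} {x : Bool} (h : cnd c false x = true) : x = true := by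
  cases c
  · exact h
  · cases h

theorem col_enc (vs : List V) (hn : vs.Nodup) (hs : ∀ x y, A x y = A y x)
    (hi : ∀ x, A x x = false) (ws : List V) : ∀ (h : ws <:+ vs) (P : Fin 4 → V → Bool)
    (hc : col (encAux A vs ws) (maskP (P 0) vs) (maskP (P 1) vs) (maskP (P 2) vs)
      (maskP (P 3) vs) = true),
    ∃ c : V → Fin 4, ∀ w ∈ ws, (∀ x ∈ vs, A w x = true → P (c w) x = false) ∧
      ∀ x ∈ ws, A w x = true → c w ≠ c x := by
  induction ws with
  | nil => intro _ _ _; exact ⟨fun _ => 0, by simp⟩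
  | cons w ws ih =>
    intro h P hc
    have ih := ih ((List.suffix_cons w ws).trans h)
    have e : col (encAux A vs (w :: ws)) = fun a b c d =>
      cnd (cnd (disj (maskP (A w) vs) a) (col (encAux A vs ws) (Nat.lor a (2 ^ ws.length)) b c d)
        false) true
      (cnd (Nat.beq a 0) false
      (cnd (cnd (disj (maskP (A w) vs) b) (col (encAux A vs ws) a (Nat.lor b (2 ^ ws.length)) c d)
        false) true
      (cnd (Nat.beq b 0) false
      (cnd (cnd (disj (maskP (A w) vs) c) (col (encAux A vs ws) a b (Nat.lor c (2 ^ ws.length)) d)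
        false) true
      (cnd (Nat.beq c 0) false
      (cnd (disj (maskP (A w) vs) d) (col (encAux A vs ws) a b c (Nat.lor d (2 ^ ws.length)))
        false)))))) := rfl
    rw [e] at hc
    simp only [] at hc
    have hb : ∀ p : V → Bool, Nat.lor (maskP p vs) (2 ^ ws.length) =
        maskP (fun x => p x || decide (x = w)) vs := by
      intro p
      rw [bit_suffix h hn, maskP_lor]
    simp only [hb] at hc
    have fin : ∀ k : Fin 4, disj (maskP (A w) vs) (maskP (P k) vs) = true →
        (∃ Q : Fin 4 → V → Bool, (∀ j x, Q j x = (P j x || (decide (j = k) && decide (x = w)))) ∧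
        col (encAux A vs ws) (maskP (Q 0) vs) (maskP (Q 1) vs) (maskP (Q 2) vs)
          (maskP (Q 3) vs) = true) →
        ∃ c : V → Fin 4, ∀ v ∈ w :: ws, (∀ x ∈ vs, A v x = true → P (c v) x = false) ∧
          ∀ x ∈ w :: ws, A v x = true → c v ≠ c x := by
      rintro k hd ⟨Q, hQ, hq⟩
      exact col_step A vs hn hs hi w ws h P Q k hQ hd (ih Q hq)
    rcases cnd_or hc with hc | hc
    · obtain ⟨h1, h2⟩ := cnd_tt hc
      refine fin 0 h1 ⟨![fun x => P 0 x || decide (x = w), P 1, P 2, P 3], ?_, h2⟩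
      intro j x; fin_cases j <;> simp
    replace hc := cnd_ff hc
    rcases cnd_or hc with hc | hc
    · obtain ⟨h1, h2⟩ := cnd_tt hc
      refine fin 1 h1 ⟨![P 0, fun x => P 1 x || decide (x = w), P 2, P 3], ?_, h2⟩
      intro j x; fin_cases j <;> simp
    replace hc := cnd_ff hc
    rcases cnd_or hc with hc | hc
    · obtain ⟨h1, h2⟩ := cnd_tt hc
      refine fin 2 h1 ⟨![P 0, P 1, fun x => P 2 x || decide (x = w), P 3], ?_, h2⟩
      intro j x; fin_cases j <;> simp
    replace hc := cnd_ff hc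
    · obtain ⟨h1, h2⟩ := cnd_tt hc
      refine fin 3 h1 ⟨![P 0, P 1, P 2, fun x => P 3 x || decide (x = w)], ?_, h2⟩
      intro j x; fin_cases j <;> simp

theorem lowB_enc (o : ℕ) (vs : List V) (ws : List V) (h : lowB o (encAux A vs ws) = true) :
    ∃ w us, (w :: us) <:+ ws ∧ vs.countP (A w) ≤ 3 ∧ disj o (2 ^ us.length) = true := by
  induction ws with
  | nil => cases h
  | cons w ws ih =>
    have e : lowB o (encAux A vs (w :: ws)) =
      cnd (Nat.ble 4 (vs.countP (A w))) (lowB o (encAux A vs ws))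
        (cnd (disj o (2 ^ ws.length)) true (lowB o (encAux A vs ws))) := rfl
    rw [e] at h
    have hrec : lowB o (encAux A vs ws) = true → ∃ v us, (v :: us) <:+ (w :: ws) ∧
        vs.countP (A v) ≤ 3 ∧ disj o (2 ^ us.length) = true := by
      intro h
      obtain ⟨v, us, h1, h2, h3⟩ := ih h
      exact ⟨v, us, h1.trans (List.suffix_cons w ws), h2, h3⟩
    cases hb : Nat.ble 4 (vs.countP (A w))
    · rw [hb] at h
      rcases cnd_or h with h | h
      · refine ⟨w, ws, List.suffix_rfl, ?_, h⟩
        by_contra hcon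
        rw [Nat.ble_eq_true_of_le (by omega)] at hb
        cases hb
      · exact hrec h
    · rw [hb] at h
      exact hrec h

theorem testBit_orL {x : ℕ} {L : List ℕ} (hx : x ∈ L) (i : ℕ) (h : (orL L).testBit i = false) :
    x.testBit i = false := by
  induction L with
  | nil => cases hx
  | cons y L ih =>
    have e : orL (y :: L) = y ||| orL L := rfl
    rw [e, Nat.testBit_or, Bool.or_eq_false_iff] at h
    rcases List.mem_cons.1 hx with rfl | hx
    · exact h.1
    · exact ih hx h.2

theorem extL_cons (adj : List Ent) (m b F y : ℕ) (L : List ℕ) :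
    extL adj m b F (y :: L) =
    cnd (cnd (disj (Nat.add y b) F) (indepM (Nat.xor (Nat.pred b) (Nat.lor m y)) adj) false)
      (List.cons (Nat.add y b)
        (cnd (cnd (disj y F)
          (joinM (Nat.xor y (Nat.land y m)) (Nat.xor m (Nat.land y m)) adj) false)
          (List.cons y (extL adj m b F L)) (extL adj m b F L)))
      (cnd (cnd (disj y F)
          (joinM (Nat.xor y (Nat.land y m)) (Nat.xor m (Nat.land y m)) adj) false)
          (List.cons y (extL adj m b F L)) (extL adj m b F L)) := rfl

theorem extL_sub (adj : List Ent) (m b F y : ℕ) (L : List ℕ) (z : ℕ)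
    (hz : z ∈ extL adj m b F L) : z ∈ extL adj m b F (y :: L) := by
  rw [extL_cons]
  generalize cnd (disj (Nat.add y b) F) _ _ = c1
  generalize cnd (disj y F) _ _ = c2
  cases c1 <;> cases c2 <;> simp [cnd, hz]

theorem extL_mem1 (adj : List Ent) (m b F x : ℕ) (L : List ℕ) (hx : x ∈ L)
    (h1 : disj (Nat.add x b) F = true)
    (h2 : indepM (Nat.xor (Nat.pred b) (Nat.lor m x)) adj = true) :
    x + b ∈ extL adj m b F L := by
  induction L with
  | nil => cases hx
  | cons y L ih =>
    rcases List.mem_cons.1 hx with rfl | hx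
    · rw [extL_cons, h1, h2]
      simp [cnd]
    · exact extL_sub _ _ _ _ _ _ _ (ih hx)

theorem extL_mem2 (adj : List Ent) (m b F x : ℕ) (L : List ℕ) (hx : x ∈ L)
    (h1 : disj x F = true)
    (h2 : joinM (Nat.xor x (Nat.land x m)) (Nat.xor m (Nat.land x m)) adj = true) :
    x ∈ extL adj m b F L := by
  induction L with
  | nil => cases hx
  | cons y L ih =>
    rcases List.mem_cons.1 hx with rfl | hx
    · rw [extL_cons, h1, h2]
      generalize cnd (disj (Nat.add x b) F) _ _ = c1
      cases c1 <;> simp [cnd]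
    · exact extL_sub _ _ _ _ _ _ _ (ih hx)

/-- Soundness of the search. -/
theorem search_sound (hs : ∀ x y, A x y = A y x) (hi : ∀ x, A x x = false)
    (h2 : ∀ a b c d, A a b = true → A c d = true →
      A a c = true ∨ A a d = true ∨ A b c = true ∨ A b d = true)
    (hmax : ∀ (w : V) (l : List V), l.Nodup → (∀ x ∈ l, A w x = true) → l.length ≤ 5)
    (hmin : ∀ (w : V) (l : List V), (∀ x, A w x = true → x ∈ l) → 4 ≤ l.length)
    (hcol : ¬ ∃ c : V → Fin 4, ∀ x y, A x y = true → c x ≠ c y) (fuel : ℕ) :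
    ∀ (vs : List V) (L : List ℕ), vs.Nodup → (∀ u, u ∉ vs → maskP (A u) vs ∈ L) →
      search fuel (2 ^ vs.length) (encAux A vs vs) L = true → False := by
  have hcnt : ∀ w (l : List V), l.Nodup → l.countP (A w) ≤ 5 := by
    intro w l hl
    rw [List.countP_eq_length_filter]
    exact hmax w _ (hl.filter _) (by simp)
  induction fuel with
  | zero => intro vs L _ _ h; cases h
  | succ fuel ih =>
    intro vs L hn hL h
    have e : search (fuel + 1) (2 ^ vs.length) (encAux A vs vs) L =
      cnd (lowB (orL L) (encAux A vs vs)) true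
      (@List.rec ℕ (fun _ => Bool) (col (encAux A vs vs) 0 0 0 0)
      (fun m L' _ =>
        cnd (cnd (Nat.ble 6 (cnt m (encAux A vs vs))) true
            (search fuel (Nat.mul 2 (2 ^ vs.length)) (extA m (2 ^ vs.length) (encAux A vs vs))
              (extL (encAux A vs vs) m (2 ^ vs.length)
                (fullM (extA m (2 ^ vs.length) (encAux A vs vs))) L)))
          (search fuel (2 ^ vs.length) (encAux A vs vs) L') false) L) := rfl
    rw [e] at h
    rcases cnd_or h with h | h
    · obtain ⟨w, us, h1, h2, h3⟩ := lowB_enc A _ _ _ h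
      have : 4 ≤ (vs.filter (A w)).length := by
        apply hmin w
        intro x hx
        rw [List.mem_filter]
        refine ⟨?_, hx⟩
        by_contra hxv
        rw [disj_bit] at h3
        have := testBit_orL (hL x hxv) us.length (by simpa using h3)
        rw [testBit_suffix _ h1, hs, hx] at this
        cases this
      rw [← List.countP_eq_length_filter] at this
      omega
    · cases L with
      | nil =>
        have hz : maskP (fun _ => false) vs = 0 := maskP_eq_zero.2 (by simp)
        obtain ⟨c, hc⟩ := col_enc A vs hn hs hi vs List.suffix_rfl (fun _ _ => false)
          (by simp only [hz]; exact h)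
        have hall : ∀ x, x ∈ vs := by
          intro x
          by_contra hx
          exact absurd (hL x hx) (by simp)
        exact hcol ⟨c, fun x y hxy => (hc x (hall x)).2 y (hall y) hxy⟩
      | cons m L' =>
        obtain ⟨ha, hb⟩ := cnd_tt h
        by_cases hu : ∃ u, u ∉ vs ∧ maskP (A u) vs = m
        · obtain ⟨u, huv, rfl⟩ := hu
          have hn' : (u :: vs).Nodup := List.nodup_cons.2 ⟨huv, hn⟩
          rcases cnd_or ha with ha | ha
          · have := Nat.le_of_ble_eq_true ha
            rw [cnt_enc A _ _ _ List.suffix_rfl] at this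
            have := hcnt u vs hn
            omega
          · rw [extA_enc A u vs hs hi] at ha
            have hp : Nat.mul 2 (2 ^ vs.length) = 2 ^ (u :: vs).length := by
              rw [List.length_cons, pow_succ]
              exact Nat.mul_comm _ _
            rw [hp] at ha
            refine ih _ _ hn' ?_ ha
            intro x hx
            rw [List.mem_cons, not_or] at hx
            obtain ⟨hxu, hxv⟩ := hx
            have hm := hL x hxv
            have hF : disj (maskP (A x) (u :: vs)) (fullM (encAux A (u :: vs) (u :: vs))) = true := by
              rw [fullM_enc, disj_maskP]
              intro w hw hxw
              rw [Bool.eq_false_iff]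
              intro hble
              have h5 := Nat.le_of_ble_eq_true hble
              have := hcnt w (x :: u :: vs) (List.nodup_cons.2 ⟨by simp [hxu, hxv], hn'⟩)
              rw [List.countP_cons, hs w x, hxw] at this
              simp only [if_true] at this
              omega
            cases hxu' : A x u
            · have e1 : maskP (A x) (u :: vs) = maskP (A x) vs := by simp [maskP, hxu']
              rw [e1] at hF ⊢
              apply extL_mem2 _ _ _ _ _ _ hm hF
              rw [maskP_land, maskP_xor, maskP_xor]
              apply joinM_enc A _ _ _ _ List.suffix_rfl
              intro c _ hc d _ hd
              have hux : A u x = false := by rw [hs]; exact hxu'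
              have c1 : A x c = true ∧ A u c = false := by
                revert hc; cases A x c <;> cases A u c <;> simp
              have d1 : A u d = true ∧ A x d = false := by
                revert hd; cases A x d <;> cases A u d <;> simp
              rcases h2 x c u d c1.1 d1.1 with h | h | h | h
              · rw [hxu'] at h; cases h
              · rw [d1.2] at h; cases h
              · rw [hs, c1.2] at h; cases h
              · exact h
            · have e1 : maskP (A x) (u :: vs) = maskP (A x) vs + 2 ^ vs.length := by
                simp [maskP, hxu']
              rw [e1] at hF ⊢
              apply extL_mem1 _ _ _ _ _ _ hm hF
              rw [← maskP_true, maskP_lor, maskP_xor]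
              apply indepM_enc A _ _ _ List.suffix_rfl
              intro c _ hc d _ hcd
              rw [Bool.eq_false_iff]
              intro hd
              have c1 : A u c = false ∧ A x c = false := by
                revert hc; cases A x c <;> cases A u c <;> simp
              have d1 : A u d = false ∧ A x d = false := by
                revert hd; cases A x d <;> cases A u d <;> simp
              rcases h2 x u c d hxu' hcd with h | h | h | h
              · rw [c1.2] at h; cases h
              · rw [d1.2] at h; cases h
              · rw [c1.1] at h; cases h
              · rw [d1.1] at h; cases h
        · refine ih vs L' hn ?_ hb
          intro x hx
          rcases List.mem_cons.1 (hL x hx) with h | h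
          · exact absurd ⟨x, hx, h⟩ hu
          · exact h

end Sound2

section Base

universe u

/-- Working form of `2K2`-freeness. -/
def T2 {V : Type u} (G : SimpleGraph V) : Prop :=
  ∀ a b c d, G.Adj a b → G.Adj c d → G.Adj a c ∨ G.Adj a d ∨ G.Adj b c ∨ G.Adj b d

/-- All degrees are at most `k`. -/
def DegLE {V : Type u} (G : SimpleGraph V) (k : ℕ) : Prop :=
  ∀ (w : V) (s : Finset V), (∀ x ∈ s, G.Adj w x) → s.card ≤ k

theorem colorable_of {V : Type u} {G : SimpleGraph V} {k : ℕ} (c : V → Fin k)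
    (h : ∀ x y, G.Adj x y → c x ≠ c y) : G.Colorable k :=
  ⟨SimpleGraph.Coloring.mk c (fun {x y} hxy => h x y hxy)⟩

theorem exists_of_colorable {V : Type u} {G : SimpleGraph V} {k : ℕ} (h : G.Colorable k) :
    ∃ c : V → Fin k, ∀ x y, G.Adj x y → c x ≠ c y := by
  obtain ⟨c⟩ := h
  exact ⟨c, fun x y hxy => c.valid hxy⟩

theorem T2.induce {V : Type u} {G : SimpleGraph V} (h : T2 G) (s : Set V) : T2 (G.induce s) :=
  fun a b c d hab hcd => h a b c d hab hcd

theorem DegLE.induce {V : Type u} {G : SimpleGraph V} {k : ℕ} (h : DegLE G k) (s : Set V) :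
    DegLE (G.induce s) k := by
  intro w t ht
  have := h w (t.map (Function.Embedding.subtype _)) (by
    intro x hx
    rw [Finset.mem_map] at hx
    obtain ⟨y, hy, rfl⟩ := hx
    exact ht y hy)
  simpa using this

open Classical in
theorem k4_iff {V : Type u} {G : SimpleGraph V} {s : Finset V} :
    G.IsNClique 4 s ↔ ∃ a b c d, G.Adj a b ∧ G.Adj a c ∧ G.Adj a d ∧ G.Adj b c ∧ G.Adj b d ∧
      G.Adj c d ∧ s = {a, b, c, d} := by
  constructor
  · intro hs
    obtain ⟨a, b, c, d, hab, hac, had, hbc, hbd, hcd, rfl⟩ := Finset.card_eq_four.1 hs.card_eq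
    have := hs.isClique
    refine ⟨a, b, c, d, ?_, ?_, ?_, ?_, ?_, ?_, rfl⟩ <;> apply this <;> simp [*]
  · rintro ⟨a, b, c, d, hab, hac, had, hbc, hbd, hcd, rfl⟩
    have h3 : G.IsNClique 3 {b, c, d} := SimpleGraph.is3Clique_iff.2 ⟨b, c, d, hbc, hbd, hcd, rfl⟩
    exact h3.insert (by simp [*])

open Classical in
theorem no_search {V : Type u} [Fintype V] (G : SimpleGraph V) (h2 : T2 G) (hd : DegLE G 5)
    (hmin : ∀ (w : V) (l : List V), (∀ x, G.Adj w x → x ∈ l) → 4 ≤ l.length)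
    (hcol : ¬ G.Colorable 4) (fuel : ℕ) (vs : List V) (L : List ℕ) (hn : vs.Nodup)
    (hL : ∀ u, u ∉ vs → maskP (fun x => decide (G.Adj u x)) vs ∈ L)
    (h : search fuel (2 ^ vs.length) (encAux (fun x y => decide (G.Adj x y)) vs vs) L = true) :
    False := by
  refine search_sound (fun x y => decide (G.Adj x y)) ?_ ?_ ?_ ?_ ?_ ?_ fuel vs L hn hL h
  · intro x y; simp [G.adj_comm]
  · intro x; simp
  · intro a b c d; simpa using h2 a b c d
  · intro w l hl hw
    rw [← List.toFinset_card_of_nodup hl]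
    apply hd w
    simpa using hw
  · intro w l hw
    apply hmin w
    simpa using hw
  · rintro ⟨c, hc⟩
    exact hcol (colorable_of c (by simpa using hc))

open Classical in
theorem base (n : ℕ) : ∀ (V : Type u) [Fintype V] (G : SimpleGraph V), Fintype.card V = n →
    T2 G → DegLE G 5 → G.CliqueFree 5 → G.Colorable 4 := by
  induction n using Nat.strong_induction_on with
  | _ n ih =>
  intro V _ G hV h2 hd hK5
  by_contra hcol
  have hmin : ∀ (w : V) (l : List V), (∀ x, G.Adj w x → x ∈ l) → 4 ≤ l.length := by
    intro w l hl
    by_contra hlen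
    have hcard : Fintype.card ({w}ᶜ : Set V) < n := by
      rw [← hV]
      exact Fintype.card_subtype_lt (x := w) (by simp)
    obtain ⟨c, hc⟩ := exists_of_colorable (ih _ hcard _ (G.induce ({w}ᶜ : Set V)) rfl
      (h2.induce _) (hd.induce _) (hK5.comap (SimpleGraph.Embedding.induce _).isContained))
    let f : V → Fin 4 := fun x => if h : x ∈ ({w}ᶜ : Set V) then c ⟨x, h⟩ else 0
    have hlt : (l.map f).toFinset.card < (Finset.univ : Finset (Fin 4)).card := by
      have := List.toFinset_card_le (l.map f)
      simp only [List.length_map] at this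
      simp only [Finset.card_univ, Fintype.card_fin]
      omega
    obtain ⟨k, -, hk⟩ := Finset.exists_mem_notMem_of_card_lt_card hlt
    have hk' : ∀ x, G.Adj w x → f x ≠ k := by
      intro x hx hfx
      apply hk
      rw [List.mem_toFinset, List.mem_map]
      exact ⟨x, hl x hx, hfx⟩
    apply hcol
    apply colorable_of (Function.update f w k)
    intro x y hxy
    by_cases hx : x = w
    · subst hx
      rw [Function.update_self, Function.update_of_ne hxy.ne']
      exact (hk' y hxy).symm
    · by_cases hy : y = w
      · subst hy
        rw [Function.update_self, Function.update_of_ne hxy.ne]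
        exact hk' x hxy.symm
      · rw [Function.update_of_ne hx, Function.update_of_ne hy]
        have hx' : x ∈ ({w}ᶜ : Set V) := hx
        have hy' : y ∈ ({w}ᶜ : Set V) := hy
        simp only [f, hx', hy', dif_pos]
        exact hc ⟨x, hx'⟩ ⟨y, hy'⟩ hxy
  have run := no_search G h2 hd hmin hcol 60
  by_cases hK4 : G.CliqueFree 4
  · have no4 : ∀ a b c d, G.Adj a b → G.Adj a c → G.Adj a d → G.Adj b c → G.Adj b d →
        G.Adj c d → False := by
      intro a b c d hab hac had hbc hbd hcd
      exact hK4 _ (k4_iff.2 ⟨a, b, c, d, hab, hac, had, hbc, hbd, hcd, rfl⟩)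
    by_cases hD : ∃ a b c d, G.Adj a b ∧ G.Adj a c ∧ G.Adj b c ∧ G.Adj d b ∧ G.Adj d c ∧ d ≠ a
    · obtain ⟨v0, v1, v2, v3, h01, h02, h12, h31, h32, hne⟩ := hD
      have h30 : ¬ G.Adj v3 v0 := fun h => no4 v3 v0 v1 v2 h h31 h32 h01 h02 h12
      have h03 : ¬ G.Adj v0 v3 := fun h => h30 h.symm
      refine run [v3, v2, v1, v0] [13,12,5,4,6,11,10,9,3,2,1,8,0] ?_ ?_ ?_
      · simp [h01.ne', h02.ne', h12.ne', h31.ne, h32.ne, hne]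
      · intro u _
        have e1 := no4 u v0 v1 v2
        have e2 := no4 u v1 v2 v3
        by_cases a0 : G.Adj u v0 <;> by_cases a1 : G.Adj u v1 <;> by_cases a2 : G.Adj u v2 <;>
          by_cases a3 : G.Adj u v3 <;>
          simp [maskP, a0, a1, a2, a3, h01, h02, h12, h31.symm, h32.symm] at e1 e2 ⊢
      · have he : encAux (fun x y => decide (G.Adj x y)) [v3, v2, v1, v0] [v3, v2, v1, v0] =
            [⟨8,6,2⟩,⟨4,11,3⟩,⟨2,13,3⟩,⟨1,6,2⟩] := by
          simp [encAux, maskP, h01, h02, h12, h31, h32, h01.symm, h02.symm, h12.symm, h31.symm,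
            h32.symm, h30, h03]
        rw [he]
        exact search_diamond
    · push Not at hD
      by_cases hK3 : G.CliqueFree 3
      · have no3 : ∀ a b c, G.Adj a b → G.Adj a c → G.Adj b c → False := by
          intro a b c hab hac hbc
          exact hK3 _ (SimpleGraph.is3Clique_iff.2 ⟨a, b, c, hab, hac, hbc, rfl⟩)
        by_cases he : ∃ a b, G.Adj a b
        · obtain ⟨a, b, hab⟩ := he
          apply hcol
          apply colorable_of (fun x => if G.Adj a x then 0 else if G.Adj b x then 1 else 2)
          intro x y hxy
          have e1 := no3 a x y
          have e2 := no3 b x y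
          have e3 := h2 a b x y hab hxy
          by_cases a1 : G.Adj a x <;> by_cases a2 : G.Adj a y <;> by_cases a3 : G.Adj b x <;>
            by_cases a4 : G.Adj b y <;> simp [a1, a2, a3, a4, hxy] at e1 e2 e3 ⊢
        · push Not at he
          exact hcol (colorable_of (fun _ => 0) (fun x y hxy => absurd hxy (he x y)))
      · rw [SimpleGraph.CliqueFree] at hK3
        push Not at hK3
        obtain ⟨s, hs⟩ := hK3
        obtain ⟨v0, v1, v2, h01, h02, h12, -⟩ := SimpleGraph.is3Clique_iff.1 hs
        refine run [v2, v1, v0] [4,2,1,0] ?_ ?_ ?_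
        · simp [h01.ne', h02.ne', h12.ne']
        · intro u hu
          simp only [List.mem_cons, List.not_mem_nil, or_false, not_or] at hu
          have e1 := hD v0 v1 v2 u h01 h02 h12
          have e2 := hD v1 v0 v2 u h01.symm h12 h02
          have e3 := hD v2 v0 v1 u h02.symm h12.symm h01
          by_cases a0 : G.Adj u v0 <;> by_cases a1 : G.Adj u v1 <;> by_cases a2 : G.Adj u v2 <;>
            simp [maskP, a0, a1, a2, hu] at e1 e2 e3 ⊢
        · have he : encAux (fun x y => decide (G.Adj x y)) [v2, v1, v0] [v2, v1, v0] =
              [⟨4,3,2⟩,⟨2,5,2⟩,⟨1,6,2⟩] := by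
            simp [encAux, maskP, h01, h02, h12, h01.symm, h02.symm, h12.symm]
          rw [he]
          exact search_triangle
  · rw [SimpleGraph.CliqueFree] at hK4
    push Not at hK4
    obtain ⟨s, hs⟩ := hK4
    obtain ⟨v0, v1, v2, v3, h01, h02, h03, h12, h13, h23, rfl⟩ := k4_iff.1 hs
    refine run [v3, v2, v1, v0] [14,13,11,7,12,10,9,6,5,3,8,4,2,1,0] ?_ ?_ ?_
    · simp [h01.ne', h02.ne', h03.ne', h12.ne', h13.ne', h23.ne']
    · intro u _
      have e1 : ¬ (G.Adj u v0 ∧ G.Adj u v1 ∧ G.Adj u v2 ∧ G.Adj u v3) := by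
        rintro ⟨a0, a1, a2, a3⟩
        refine hK5 _ (hs.insert (a := u) ?_)
        simp [a0, a1, a2, a3]
      by_cases a0 : G.Adj u v0 <;> by_cases a1 : G.Adj u v1 <;> by_cases a2 : G.Adj u v2 <;>
        by_cases a3 : G.Adj u v3 <;> simp [maskP, a0, a1, a2, a3] at e1 ⊢
    · have he : encAux (fun x y => decide (G.Adj x y)) [v3, v2, v1, v0] [v3, v2, v1, v0] =
          [⟨8,7,3⟩,⟨4,11,3⟩,⟨2,13,3⟩,⟨1,14,3⟩] := by
        simp [encAux, maskP, h01, h02, h03, h12, h13, h23, h01.symm, h02.symm, h03.symm, h12.symm,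
          h13.symm, h23.symm]
      rw [he]
      exact search_K4

end Base

section Step

universe u

variable {V : Type u} {G : SimpleGraph V} {j : ℕ}

open Classical in
theorem cliques_meet (h2 : T2 G) (hd : DegLE G (j + 1)) (hj : 5 ≤ j) {K L : Finset V}
    (hK : G.IsNClique j K) (hL : G.IsNClique j L) : ∃ x ∈ K, x ∈ L := by
  by_contra hcon
  push Not at hcon
  have hN : ∀ x ∈ K, j ≤ (L.filter (fun y => ¬ G.Adj x y)).card + 2 := by
    intro x hx
    have h1 := hd x (K.erase x ∪ L.filter (fun y => G.Adj x y)) (by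
      intro y hy
      rcases Finset.mem_union.1 hy with hy | hy
      · rw [Finset.mem_erase] at hy
        exact hK.isClique hx hy.2 hy.1.symm
      · exact (Finset.mem_filter.1 hy).2)
    rw [Finset.card_union_of_disjoint, Finset.card_erase_of_mem hx, hK.card_eq] at h1
    · have := Finset.card_filter_add_card_filter_not (s := L) (fun y => G.Adj x y)
      rw [hL.card_eq] at this
      omega
    · rw [Finset.disjoint_left]
      intro y hy hy'
      exact hcon y (Finset.mem_of_mem_erase hy) (Finset.mem_filter.1 hy').1
  have hI : ∀ x ∈ K, ∀ y ∈ K, x ≠ y →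
      (L.filter (fun z => ¬ G.Adj x z) ∩ L.filter (fun z => ¬ G.Adj y z)).card ≤ 1 := by
    intro x hx y hy hxy
    rw [Finset.card_le_one]
    intro c hc d hd'
    by_contra hne
    simp only [Finset.mem_inter, Finset.mem_filter] at hc hd'
    rcases h2 x y c d (hK.isClique hx hy hxy) (hL.isClique hc.1.1 hd'.1.1 hne) with h | h | h | h
    · exact hc.1.2 h
    · exact hd'.1.2 h
    · exact hc.2.2 h
    · exact hd'.2.2 h
  obtain ⟨x, hx, y, hy, z, hz, hxy, hxz, hyz⟩ := Finset.two_lt_card.1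
    (show 2 < K.card by rw [hK.card_eq]; omega)
  have a1 := hI x hx y hy hxy
  have a2 := hI x hx z hz hxz
  have a3 := hI y hy z hz hyz
  have b1 := hN x hx
  have b2 := hN y hy
  have b3 := hN z hz
  have hX := Finset.filter_subset (fun w => ¬ G.Adj x w) L
  have hY := Finset.filter_subset (fun w => ¬ G.Adj y w) L
  have hZ := Finset.filter_subset (fun w => ¬ G.Adj z w) L
  generalize L.filter (fun w => ¬ G.Adj x w) = X at *
  generalize L.filter (fun w => ¬ G.Adj y w) = Y at *
  generalize L.filter (fun w => ¬ G.Adj z w) = Z at *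
  have c1 := Finset.card_union_add_card_inter X Y
  have c2 := Finset.card_union_add_card_inter (X ∪ Y) Z
  rw [Finset.union_inter_distrib_right] at c2
  have c3 := Finset.card_union_le (X ∩ Z) (Y ∩ Z)
  have c4 := Finset.card_le_card (Finset.union_subset (Finset.union_subset hX hY) hZ)
  rw [hL.card_eq] at c4
  omega

open Classical in
theorem clique_sdiff (h2 : T2 G) (hd : DegLE G (j + 1)) (hj : 5 ≤ j) {K L : Finset V}
    (hK : G.IsNClique j K) (hL : G.IsNClique j L) : (L \ K).card ≤ 2 := by
  obtain ⟨x, hxK, hxL⟩ := cliques_meet h2 hd hj hK hL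
  have h1 := hd x ((K ∪ L).erase x) (by
    intro y hy
    rw [Finset.mem_erase, Finset.mem_union] at hy
    rcases hy with ⟨hne, hy | hy⟩
    · exact hK.isClique hxK hy hne.symm
    · exact hL.isClique hxL hy hne.symm)
  rw [Finset.card_erase_of_mem (Finset.mem_union_left _ hxK)] at h1
  have h3 := Finset.card_sdiff_add_card L K
  rw [Finset.union_comm, hK.card_eq] at h3
  omega

open Classical in
theorem hajnal (h2 : T2 G) (hd : DegLE G (j + 1)) (hj : 5 ≤ j) (hfree : G.CliqueFree (j + 1))
    {K : Finset V} (hK : G.IsNClique j K) (n : ℕ) : ∀ (I U : Finset V), I.card = n →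
    I.Nonempty → I ⊆ U → (∀ i ∈ I, ∀ x ∈ U, x ≠ i → G.Adj i x) → K ⊆ U →
    2 * j ≤ I.card + U.card → ∃ w, ∀ L, G.IsNClique j L → w ∈ L := by
  induction n using Nat.strong_induction_on with
  | _ n ih =>
  intro I U hn hne hIU hadj hKU hcard
  by_cases hall : ∀ L, G.IsNClique j L → I ⊆ L
  · obtain ⟨w, hw⟩ := hne
    exact ⟨w, fun L hL => hall L hL hw⟩
  push Not at hall
  obtain ⟨L, hL, hIL⟩ := hall
  have hlt : (I ∩ L).card < n := by
    rw [← hn]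
    apply Finset.card_lt_card
    refine ⟨Finset.inter_subset_left, fun h => hIL (h.trans Finset.inter_subset_right)⟩
  have hcl : G.IsClique (I ∪ (L ∩ U) : Finset V) := by
    intro a ha b hb hab
    simp only [Finset.coe_union, Finset.coe_inter, Set.mem_union, Finset.mem_coe,
      Set.mem_inter_iff] at ha hb
    rcases ha with ha | ha
    · refine hadj a ha b ?_ hab.symm
      rcases hb with hb | hb
      · exact hIU hb
      · exact hb.2
    · rcases hb with hb | hb
      · exact (hadj b hb a ha.2 hab).symm
      · exact hL.isClique ha.1 hb.1 hab
  have hle : (I ∪ (L ∩ U)).card ≤ j := by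
    by_contra hgt
    obtain ⟨t, ht, htc⟩ := Finset.exists_subset_card_eq (show j + 1 ≤ (I ∪ (L ∩ U)).card by omega)
    exact hfree t ⟨hcl.subset (by exact_mod_cast ht), htc⟩
  have e1 := Finset.card_union_add_card_inter I (L ∩ U)
  have e2 : I ∩ (L ∩ U) = I ∩ L := by
    ext x
    simp only [Finset.mem_inter]
    exact ⟨fun h => ⟨h.1, h.2.1⟩, fun h => ⟨h.1, h.2, hIU h.1⟩⟩
  rw [e2] at e1
  have e3 := Finset.card_union_add_card_inter U L
  rw [Finset.inter_comm U L, hL.card_eq] at e3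
  have hcard' : 2 * j ≤ (I ∩ L).card + (U ∪ L).card := by omega
  refine ih _ hlt (I ∩ L) (U ∪ L) rfl ?_ ?_ ?_ ?_ hcard'
  · rw [Finset.nonempty_iff_ne_empty]
    intro hemp
    rw [hemp, Finset.card_empty] at hcard'
    obtain ⟨i, hi⟩ := hne
    have d1 := hd i (U.erase i) (by
      intro y hy
      rw [Finset.mem_erase] at hy
      exact hadj i hi y hy.2 hy.1)
    rw [Finset.card_erase_of_mem (hIU hi)] at d1
    have d2 := Finset.card_sdiff_add_card L U
    rw [Finset.union_comm] at d2
    have d3 := Finset.card_le_card (Finset.sdiff_subset_sdiff (Finset.Subset.refl L) hKU)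
    have d4 := clique_sdiff h2 hd hj hK hL
    omega
  · exact (Finset.inter_subset_left.trans hIU).trans Finset.subset_union_left
  · intro i hi x hx hxi
    rw [Finset.mem_inter] at hi
    rcases Finset.mem_union.1 hx with hx | hx
    · exact hadj i hi.1 x hx hxi
    · exact hL.isClique hi.2 hx hxi.symm
  · exact hKU.trans Finset.subset_union_left

theorem exists_hit (h2 : T2 G) (hd : DegLE G (j + 1)) (hj : 5 ≤ j) (hfree : G.CliqueFree (j + 1)) :
    ∃ S : Set V, (∀ x ∈ S, ∀ y ∈ S, ¬ G.Adj x y) ∧ ∀ L, G.IsNClique j L → ∃ w ∈ S, w ∈ L := by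
  by_cases hK : ∃ K, G.IsNClique j K
  · obtain ⟨K, hK⟩ := hK
    obtain ⟨w, hw⟩ := hajnal h2 hd hj hfree hK _ K K rfl
      (by rw [← Finset.card_pos, hK.card_eq]; omega) (Finset.Subset.refl _)
      (fun i hi x hx hxi => hK.isClique hi hx hxi.symm) (Finset.Subset.refl _)
      (by rw [hK.card_eq]; omega)
    exact ⟨{w}, by simp, fun L hL => ⟨w, rfl, hw L hL⟩⟩
  · push Not at hK
    exact ⟨∅, by simp, fun L hL => absurd hL (hK L)⟩

open Classical in
theorem step (hj : 5 ≤ j) (ih : ∀ (V : Type u) [Fintype V] (G : SimpleGraph V),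
    T2 G → DegLE G j → G.CliqueFree j → G.Colorable (j - 1))
    (V : Type u) [Fintype V] (G : SimpleGraph V)
    (h2 : T2 G) (hd : DegLE G (j + 1)) (hfree : G.CliqueFree (j + 1)) : G.Colorable j := by
  obtain ⟨S₀, hS₀, hhit⟩ := exists_hit h2 hd hj hfree
  obtain ⟨S, hsub, hmax⟩ := Finite.exists_le_maximal
    (p := fun S : Set V => ∀ x ∈ S, ∀ y ∈ S, ¬ G.Adj x y) hS₀
  have hS := hmax.prop
  have hdom : ∀ v, v ∉ S → ∃ s ∈ S, G.Adj v s := by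
    intro v hv
    by_contra hcon
    push Not at hcon
    have := hmax.le_of_ge (y := insert v S) (by
      intro x hx y hy
      rcases hx with rfl | hx
      · rcases hy with rfl | hy
        · simp
        · exact hcon y hy
      · rcases hy with rfl | hy
        · exact fun h => hcon x hx h.symm
        · exact hS x hx y hy) (Set.subset_insert v S)
    exact hv (this (Set.mem_insert v S))
  have hc := ih _ (G.induce Sᶜ) (h2.induce _) (by
    intro w t ht
    obtain ⟨s, hs, hws⟩ := hdom w w.2
    have := hd w (insert s (t.map (Function.Embedding.subtype _))) (by
      intro x hx
      rcases Finset.mem_insert.1 hx with rfl | hx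
      · exact hws
      · rw [Finset.mem_map] at hx
        obtain ⟨y, hy, rfl⟩ := hx
        exact ht y hy)
    rw [Finset.card_insert_of_notMem, Finset.card_map] at this
    · omega
    · intro hx
      rw [Finset.mem_map] at hx
      obtain ⟨y, hy, rfl⟩ := hx
      exact y.2 hs) (by
    intro t ht
    obtain ⟨w, hw, hwt⟩ := hhit (t.map (Function.Embedding.subtype _)) (by
      refine ⟨?_, by rw [Finset.card_map, ht.card_eq]⟩
      intro a ha b hb hab
      rw [Finset.mem_coe, Finset.mem_map] at ha hb
      obtain ⟨a, ha, rfl⟩ := ha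
      obtain ⟨b, hb, rfl⟩ := hb
      exact ht.isClique ha hb (fun h => hab (by rw [h])))
    rw [Finset.mem_map] at hwt
    obtain ⟨y, hy, rfl⟩ := hwt
    exact y.2 (hsub hw))
  obtain ⟨m, rfl⟩ : ∃ m, j = m + 1 := ⟨j - 1, by omega⟩
  rw [Nat.add_sub_cancel] at hc
  obtain ⟨c, hc⟩ := exists_of_colorable hc
  apply colorable_of (fun x => if h : x ∈ Sᶜ then (c ⟨x, h⟩).castSucc else Fin.last m)
  intro x y hxy
  by_cases hx : x ∈ Sᶜ <;> by_cases hy : y ∈ Sᶜ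
  · simp only [hx, hy, dif_pos]
    intro h
    exact hc ⟨x, hx⟩ ⟨y, hy⟩ hxy (Fin.castSucc_injective _ h)
  · simp only [hx, hy, dif_pos, dif_neg, not_false_eq_true]
    exact (Fin.castSucc_lt_last _).ne
  · simp only [hx, hy, dif_pos, dif_neg, not_false_eq_true]
    exact (Fin.castSucc_lt_last _).ne'
  · exact absurd hxy (hS x (not_not.1 hx) y (not_not.1 hy))

theorem all (d : ℕ) : ∀ (V : Type u) [Fintype V] (G : SimpleGraph V),
    T2 G → DegLE G (d + 5) → G.CliqueFree (d + 5) → G.Colorable (d + 5 - 1) := by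
  induction d with
  | zero => intro V _ G h2 hd hf; exact base _ V G rfl h2 hd hf
  | succ d ih =>
    intro V _ G h2 hd hf
    have e : d + 1 + 5 = d + 5 + 1 := by omega
    rw [e] at hd hf ⊢
    exact step (by omega) ih V G h2 hd hf

end Step

end BK

theorem twoK2Free_colorable_maxDegree_sub_one
    {V : Type*} [Fintype V] (G : SimpleGraph V) [DecidableRel G.Adj]
    (hfree : TwoK2Free G) (hΔ : 5 ≤ G.maxDegree)
    (hω : G.cliqueNum ≤ G.maxDegree - 1) :
    G.Colorable (G.maxDegree - 1) ∧ G.chromaticNumber ≤ (G.maxDegree - 1 : ℕ) := by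
  have h2 : BK.T2 G := by
    intro a b c d hab hcd
    by_contra hcon
    push Not at hcon
    obtain ⟨h1, h2, h3, h4⟩ := hcon
    refine hfree ⟨a, b, c, d, hab.ne, ?_, ?_, ?_, ?_, hcd.ne, hab, hcd, h1, h2, h3, h4⟩
    · rintro rfl; exact h2 hcd
    · rintro rfl; exact h1 hcd.symm
    · rintro rfl; exact h4 hcd
    · rintro rfl; exact h3 hcd.symm
  have hd : BK.DegLE G G.maxDegree := by
    intro w s hs
    refine le_trans ?_ (G.degree_le_maxDegree w)
    apply Finset.card_le_card
    intro x hx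
    rw [SimpleGraph.mem_neighborFinset]
    exact hs x hx
  have hf : G.CliqueFree G.maxDegree := by
    intro s hs
    have := hs.isClique.card_le_cliqueNum
    rw [hs.card_eq] at this
    omega
  have hc : G.Colorable (G.maxDegree - 1) := by
    obtain ⟨d, hd'⟩ : ∃ d, G.maxDegree = d + 5 := ⟨G.maxDegree - 5, by omega⟩
    rw [hd'] at hd hf ⊢
    exact BK.all d V G h2 hd hf
  exact ⟨hc, hc.chromaticNumber_le⟩
end

section
/- Let G be a finite simple 2K2-free graph with maximum degree Δ(G) ≥ 5. If χ(G) = Δ(G), then G contains a clique on Δ(G) vertices, i.e., ω(G) ≥ Δ(G). -/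
open Classical in
/-- the degree of `v` into the finite set `S` -/
noncomputable def dg {V : Type*} (G : SimpleGraph V) (S : Finset V) (v : V) : ℕ :=
  (S.filter (fun u => G.Adj v u)).card

/-- the subgraph induced on `S` is `m`-colourable -/
def Col {V : Type*} (G : SimpleGraph V) (S : Finset V) (m : ℕ) : Prop :=
  ∃ f : V → Fin m, ∀ u ∈ S, ∀ v ∈ S, G.Adj u v → f u ≠ f v

theorem tk {V : Type*} {G : SimpleGraph V} (h : TwoK2Free G) {a b c d : V} (hab : G.Adj a b)
    (hcd : G.Adj c d) (hac : ¬ G.Adj a c) (had : ¬ G.Adj a d) (hbc : ¬ G.Adj b c)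
    (hbd : ¬ G.Adj b d) (h1 : a ≠ c) (h2 : a ≠ d) (h3 : b ≠ c) (h4 : b ≠ d) : False :=
  h ⟨a, b, c, d, hab.ne, h1, h2, h3, h4, hcd.ne, hab, hcd, hac, had, hbc, hbd⟩

theorem col_of_finset {V : Type*} {G : SimpleGraph V} {S : Finset V} {m : ℕ} (hm : 0 < m)
    {α : Type*} (C : Finset α) (hC : C.card ≤ m) (f : V → α) (hf : ∀ v ∈ S, f v ∈ C)
    (h : ∀ u ∈ S, ∀ v ∈ S, G.Adj u v → f u ≠ f v) : Col G S m := by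
  classical
  have e := C.equivFin
  refine ⟨fun v => if hv : f v ∈ C then Fin.castLE hC (e ⟨f v, hv⟩) else ⟨0, hm⟩, ?_⟩
  intro u hu v hv huv heq
  simp only [hf u hu, hf v hv, dif_pos] at heq
  have h1 := Fin.castLE_injective hC heq
  have h2 := e.injective h1
  exact h u hu v hv huv (by simpa using h2)

theorem col_four {V : Type*} {G : SimpleGraph V} {S : Finset V}
    (P Q R T : V → Prop) (hS : ∀ v ∈ S, P v ∨ Q v ∨ R v ∨ T v)
    (hP : ∀ a b, P a → P b → ¬ G.Adj a b) (hQ : ∀ a b, Q a → Q b → ¬ G.Adj a b)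
    (hR : ∀ a b, R a → R b → ¬ G.Adj a b) (hT : ∀ a b, T a → T b → ¬ G.Adj a b) :
    Col G S 4 := by
  classical
  refine ⟨fun v => if P v then 0 else if Q v then 1 else if R v then 2 else 3, ?_⟩
  intro u hu v hv huv
  have h1 := hS u hu
  have h2 := hS v hv
  have hP' := hP u v
  have hQ' := hQ u v
  have hR' := hR u v
  have hT' := hT u v
  by_cases a1 : P u <;> by_cases a2 : Q u <;> by_cases a3 : R u <;>
  by_cases b1 : P v <;> by_cases b2 : Q v <;> by_cases b3 : R v <;> simp_all

theorem hall_aux {V : Type*} [DecidableEq V] (H K : Finset V) (t : V → Finset V)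
    (hc : H.card ≤ K.card) (hne : ∀ a ∈ H, (t a).Nonempty)
    (h2 : ∀ c ∈ K, (H.filter (fun a => c ∉ t a)).card ≤ 2)
    (h3 : ∀ a ∈ H, ∀ b ∈ H, a ≠ b → 2 ≤ (t a ∪ t b).card) :
    ∃ f : V → V, (∀ a ∈ H, f a ∈ t a) ∧ ∀ a ∈ H, ∀ b ∈ H, f a = f b → a = b := by
  have key := (Finset.all_card_le_biUnion_card_iff_exists_injective
    (fun a : {a // a ∈ H} => t a.1)).1 ?_
  · obtain ⟨f, hf, hft⟩ := key
    refine ⟨fun a => if h : a ∈ H then f ⟨a, h⟩ else a, ?_, ?_⟩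
    · intro a ha
      simp only [ha, dif_pos]
      exact hft ⟨a, ha⟩
    · intro a ha b hb hab
      simp only [ha, hb, dif_pos] at hab
      simpa using hf hab
  · intro s
    rcases Nat.lt_or_ge s.card 3 with hs | hs
    · interval_cases hs' : s.card
      · simp
      · obtain ⟨a, rfl⟩ := Finset.card_eq_one.1 hs'
        simpa [Nat.succ_le_iff] using (hne a.1 a.2).card_pos
      · obtain ⟨a, b, hab, rfl⟩ := Finset.card_eq_two.1 hs'
        have := h3 a.1 a.2 b.1 b.2 (fun h => hab (Subtype.ext h))
        simpa using this
    · have hK : K ⊆ s.biUnion (fun a => t a.1) := by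
        intro c hcK
        by_contra hcon
        simp only [Finset.mem_biUnion, not_exists, not_and] at hcon
        have : (s.map (Function.Embedding.subtype _)) ⊆ H.filter (fun a => c ∉ t a) := by
          intro a ha
          simp only [Finset.mem_map, Function.Embedding.subtype_apply] at ha
          obtain ⟨b, hb, rfl⟩ := ha
          exact Finset.mem_filter.2 ⟨b.2, hcon b hb⟩
        have := Finset.card_le_card this
        rw [Finset.card_map] at this
        have := h2 c hcK
        omega
      have h5 := Finset.card_le_card hK
      have h4 : s.card ≤ H.card := by
        have := Finset.card_le_univ s
        simpa using this
      omega

theorem dg_union {V : Type*} [DecidableEq V] {G : SimpleGraph V} {S K : Finset V} (hK : K ⊆ S)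
    (v : V) : dg G S v = dg G K v + dg G (S \ K) v := by
  classical
  unfold dg
  rw [← Finset.card_union_of_disjoint, ← Finset.filter_union, Finset.union_sdiff_of_subset hK]
  exact Finset.disjoint_filter_filter Finset.disjoint_sdiff

theorem dg_clique {V : Type*} [DecidableEq V] {G : SimpleGraph V} {K : Finset V}
    (hK : G.IsClique (K : Set V)) {c : V} (hc : c ∈ K) : dg G K c + 1 = K.card := by
  classical
  unfold dg
  have : K.filter (fun u => G.Adj c u) = K.erase c := by
    ext u
    simp only [Finset.mem_filter, Finset.mem_erase]
    constructor
    · rintro ⟨h1, h2⟩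
      exact ⟨h2.ne', h1⟩
    · rintro ⟨h1, h2⟩
      exact ⟨h2, hK hc h2 (Ne.symm h1)⟩
  rw [this, Finset.card_erase_add_one hc]

theorem dg_sum {V : Type*} {G : SimpleGraph V} (H K : Finset V) :
    ∑ a ∈ H, dg G K a = ∑ c ∈ K, dg G H c := by
  classical
  have := Finset.sum_card_bipartiteAbove_eq_sum_card_bipartiteBelow (s := H) (t := K)
    (r := fun a c => G.Adj a c)
  simp only [Finset.bipartiteAbove, Finset.bipartiteBelow] at this
  unfold dg
  simpa [G.adj_comm] using this

/-- Extending the tautological colouring of a clique `K` to the rest of `S`. -/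
theorem col_ext {V : Type*} [DecidableEq V] {G : SimpleGraph V} {S K : Finset V} {m : ℕ}
    (hm : 0 < m) (hKm : K.card = m) (f : V → V)
    (h1 : ∀ a ∈ S \ K, f a ∈ K) (h2 : ∀ a ∈ S \ K, ¬ G.Adj a (f a))
    (h3 : ∀ a ∈ S \ K, ∀ b ∈ S \ K, G.Adj a b → f a ≠ f b) : Col G S m := by
  refine col_of_finset hm K hKm.le (fun v => if v ∈ K then v else f v) ?_ ?_
  · intro v hv
    by_cases h : v ∈ K
    · simp [h]
    · simpa [h] using h1 v (by simp [hv, h])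
  · intro u hu v hv huv
    by_cases hu' : u ∈ K <;> by_cases hv' : v ∈ K <;> simp only [hu', hv', if_true, if_false]
    · exact huv.ne
    · rintro rfl
      exact h2 v (by simp [hv, hv']) huv.symm
    · rintro rfl
      exact h2 u (by simp [hu, hu']) huv
    · exact h3 u (by simp [hu, hu']) v (by simp [hv, hv']) huv

theorem clique_case {V : Type*} [DecidableEq V] {G : SimpleGraph V} (hfree : TwoK2Free G)
    {S K : Finset V}
    {m : ℕ} (hm : 4 ≤ m) (hdeg : ∀ v ∈ S, dg G S v ≤ m + 1) (hmin : ∀ v ∈ S, m ≤ dg G S v)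
    (hcl : ∀ C ⊆ S, G.IsClique (C : Set V) → C.card ≤ m)
    (hKS : K ⊆ S) (hK : G.IsClique (K : Set V)) (hKm : K.card = m) : Col G S m := by
  classical
  obtain ⟨H, hH⟩ : ∃ H, H = S \ K := ⟨_, rfl⟩
  have hHS : ∀ a ∈ H, a ∈ S ∧ a ∉ K := by simp [hH]
  have out : ∀ c ∈ K, dg G H c ≤ 2 := by
    intro c hc
    have h1 := dg_union (G := G) hKS c
    have h2 := dg_clique hK hc
    have h3 := hdeg c (hKS hc)
    rw [← hH] at h1
    omega
  have hsum : ∑ a ∈ H, dg G K a ≤ 2 * m := by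
    rw [dg_sum]
    calc _ ≤ ∑ c ∈ K, 2 := Finset.sum_le_sum out
      _ = 2 * m := by simp [hKm, mul_comm]
  have hsub : ∀ B ⊆ H, ∑ a ∈ B, dg G K a ≤ 2 * m := fun B hB =>
    (Finset.sum_le_sum_of_subset hB).trans hsum
  have hmin' : ∀ a ∈ H, m ≤ dg G K a + dg G H a := by
    intro a ha
    have h1 := dg_union (G := G) hKS a
    rw [← hH] at h1
    have := hmin a (hHS a ha).1
    omega
  -- lists
  obtain ⟨L, hL⟩ : ∃ L : V → Finset V, L = fun a => K.filter (fun c => ¬ G.Adj a c) := ⟨_, rfl⟩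
  have hLmem : ∀ a c, c ∈ L a ↔ c ∈ K ∧ ¬ G.Adj a c := by simp [hL]
  have hLcard : ∀ a, (L a).card + dg G K a = m := by
    intro a
    have := Finset.card_filter_add_card_filter_not (s := K) (fun c => G.Adj a c)
    simp only [hL, dg]
    omega
  have hLne : ∀ a ∈ H, (L a).Nonempty := by
    intro a ha
    by_contra hcon
    rw [Finset.not_nonempty_iff_eq_empty] at hcon
    have hadj : ∀ c ∈ K, G.Adj a c := by
      intro c hc
      by_contra h
      have : c ∈ L a := (hLmem a c).2 ⟨hc, h⟩
      simp [hcon] at this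
    have h1 := hcl (insert a K) (Finset.insert_subset (hHS a ha).1 hKS) (by
      rw [Finset.coe_insert]
      exact hK.insert (fun b hb _ => hadj b hb))
    rw [Finset.card_insert_of_notMem (hHS a ha).2] at h1
    omega
  have hedge : ∀ a ∈ H, ∀ b ∈ H, G.Adj a b → m ≤ dg G K a + dg G K b + 1 := by
    intro a ha b hb hab
    have h1 : (L a ∩ L b).card ≤ 1 := by
      rw [Finset.card_le_one]
      intro c hc d hd
      by_contra hcd
      simp only [Finset.mem_inter, hLmem] at hc hd
      refine tk hfree hab (hK hc.1.1 hd.1.1 hcd) hc.1.2 hd.1.2 hc.2.2 hd.2.2 ?_ ?_ ?_ ?_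
      · rintro rfl; exact (hHS _ ha).2 hc.1.1
      · rintro rfl; exact (hHS _ ha).2 hd.1.1
      · rintro rfl; exact (hHS _ hb).2 hc.1.1
      · rintro rfl; exact (hHS _ hb).2 hd.1.1
    have h2 := Finset.card_union_add_card_inter (L a) (L b)
    have h3 : (L a ∪ L b).card ≤ m := by
      rw [← hKm]
      apply Finset.card_le_card
      intro c
      simp only [Finset.mem_union, hLmem]
      tauto
    have h4 := hLcard a
    have h5 := hLcard b
    omega
  have hmiss : ∀ c ∈ K, (H.filter (fun a => c ∉ L a)).card ≤ 2 := by
    intro c hc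
    refine le_trans (le_of_eq ?_) (out c hc)
    unfold dg
    congr 1
    ext a
    simp [hLmem, hc, G.adj_comm]
  -- neighbourhood of a small vertex
  have hsmall : ∀ a ∈ H, dg G K a + (m - dg G K a) * (m - 1 - dg G K a) ≤ 2 * m := by
    intro a ha
    have h1 := hsub (insert a (H.filter (fun u => G.Adj a u))) (by
      apply Finset.insert_subset ha (Finset.filter_subset _ _))
    rw [Finset.sum_insert (by simp)] at h1
    have h2 : (H.filter (fun u => G.Adj a u)).card • (m - 1 - dg G K a) ≤
        ∑ u ∈ H.filter (fun u => G.Adj a u), dg G K u := by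
      apply Finset.card_nsmul_le_sum
      intro u hu
      rw [Finset.mem_filter] at hu
      have := hedge a ha u hu.1 hu.2
      omega
    have h3 : m - dg G K a ≤ (H.filter (fun u => G.Adj a u)).card := by
      have := hmin' a ha
      unfold dg at this ⊢
      omega
    have h4 := Nat.mul_le_mul_right (m - 1 - dg G K a) h3
    simp only [smul_eq_mul] at h2
    omega
  have hstr : H.card ≤ 5 ∧ (H.card ≤ m ∨ (m = 4 ∧ ∃ s ∈ H, ∃ t ∈ H, s ≠ t ∧ ¬ G.Adj s t ∧
      dg G K s = 1 ∧ dg G K t = 1 ∧ ∀ a ∈ H, dg G K a ≤ 2)) := by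
    by_cases hbig : ∀ a ∈ H, m - 1 ≤ 2 * dg G K a
    · have h1 : H.card • (m - 1) ≤ ∑ a ∈ H, 2 * dg G K a := Finset.card_nsmul_le_sum _ _ _ hbig
      rw [← Finset.mul_sum, smul_eq_mul] at h1
      have h2 : H.card * (m - 1) ≤ 4 * m := by omega
      obtain ⟨p, rfl⟩ : ∃ p, m = p + 1 := ⟨m - 1, by omega⟩
      simp only [Nat.add_sub_cancel] at h2
      have h3 : H.card ≤ 5 := by
        by_contra hcon
        nlinarith
      refine ⟨h3, Or.inl ?_⟩
      by_contra hcon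
      have hp : p = 3 := by omega
      subst hp
      have h4 : H.card • 2 ≤ ∑ a ∈ H, dg G K a := by
        apply Finset.card_nsmul_le_sum
        intro a ha
        have := hbig a ha
        omega
      rw [smul_eq_mul] at h4
      omega
    · push Not at hbig
      obtain ⟨s, hs, hss⟩ := hbig
      have hm4 : m = 4 := by
        have h1 := hsmall s hs
        generalize dg G K s = d at h1 hss
        obtain ⟨q, rfl⟩ : ∃ q, m = d + q + 1 := ⟨m - 1 - d, by omega⟩
        have e1 : d + q + 1 - d = q + 1 := by omega
        have e2 : d + q + 1 - 1 - d = q := by omega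
        rw [e1, e2] at h1
        have hq : q ≤ 2 := by
          by_contra hcon
          have h3 : 3 ≤ q := by omega
          have h4 : d + 1 ≤ q := by omega
          clear hsmall hsum hsub hss hm
          nlinarith
        omega
      have hpos : ∀ a ∈ H, 1 ≤ dg G K a := by
        intro a ha
        by_contra hcon
        have h0 : dg G K a = 0 := by omega
        have := hsmall a ha
        rw [h0, hm4] at this
        omega
      have hs1 : dg G K s = 1 := by
        have := hpos s hs
        omega
      obtain ⟨B, hB⟩ : ∃ B, B = H.filter (fun u => G.Adj s u) := ⟨_, rfl⟩
      have hBH : B ⊆ H := hB ▸ Finset.filter_subset _ _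
      have hsB : s ∉ B := by simp [hB]
      have hB3 : 3 ≤ B.card := by
        have := hmin' s hs
        unfold dg at this hs1
        rw [← hB] at this
        omega
      have hB2 : ∀ u ∈ B, 2 ≤ dg G K u := by
        intro u hu
        rw [hB, Finset.mem_filter] at hu
        have := hedge s hs u hu.1 hu.2
        omega
      have hBs : B.card • 2 ≤ ∑ u ∈ B, dg G K u := Finset.card_nsmul_le_sum _ _ _ hB2
      have hins : insert s B ⊆ H := Finset.insert_subset hs hBH
      obtain ⟨R, hR⟩ : ∃ R, R = H \ insert s B := ⟨_, rfl⟩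
      have hsplit := Finset.sum_sdiff (f := fun a => dg G K a) hins
      have hcsplit := Finset.card_sdiff_add_card_eq_card hins
      rw [← hR] at hsplit hcsplit
      rw [Finset.sum_insert hsB] at hsplit
      rw [Finset.card_insert_of_notMem hsB] at hcsplit
      have hRH : R ⊆ H := hR ▸ Finset.sdiff_subset
      have hRs : R.card • 1 ≤ ∑ u ∈ R, dg G K u :=
        Finset.card_nsmul_le_sum _ _ _ (fun a ha => hpos a (hRH ha))
      simp only [smul_eq_mul] at hBs hRs
      refine ⟨by omega, ?_⟩
      by_cases hle : H.card ≤ m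
      · exact Or.inl hle
      · right
        refine ⟨hm4, s, hs, ?_⟩
        have hR1 : R.card = 1 := by omega
        obtain ⟨t, ht⟩ := Finset.card_eq_one.1 hR1
        have htR : t ∈ R := by simp [ht]
        rw [ht, Finset.sum_singleton] at hsplit hRs
        have htH := hRH htR
        rw [hR, Finset.mem_sdiff, Finset.mem_insert, not_or] at htR
        have ht1 := hpos t htH
        refine ⟨t, htH, Ne.symm htR.2.1, ?_, hs1, by omega, ?_⟩
        · intro hadj
          exact htR.2.2 (by rw [hB]; simp [htH, hadj])
        · intro a ha
          by_contra hcon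
          by_cases haB : a ∈ B
          · have h7 := Finset.add_sum_erase B (fun a => dg G K a) haB
            have h8 : (B.erase a).card • 2 ≤ ∑ u ∈ B.erase a, dg G K u :=
              Finset.card_nsmul_le_sum _ _ _ (fun u hu => hB2 u (Finset.mem_of_mem_erase hu))
            have h9 := Finset.card_erase_add_one haB
            simp only [smul_eq_mul] at h8 h7
            omega
          · by_cases has : a = s
            · subst has
              omega
            · have : a ∈ R := by
                rw [hR]
                simp [ha, haB, has]
              rw [ht, Finset.mem_singleton] at this
              subst this
              omega
  obtain ⟨hH5, hstr⟩ := hstr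
  -- the twin case
  by_cases htwin : ∃ a ∈ H, ∃ b ∈ H, a ≠ b ∧ (L a ∪ L b).card < 2
  · obtain ⟨a, ha, b, hb, hab, hlt⟩ := htwin
    obtain ⟨c, hc⟩ := hLne a ha
    have hall : ∀ d, d ∈ L a ∪ L b → d = c := by
      intro d hd
      exact Finset.card_le_one.1 (by omega) d hd c (Finset.mem_union_left _ hc)
    have hcK : c ∈ K := ((hLmem _ _).1 hc).1
    have hac : ¬ G.Adj a c := ((hLmem _ _).1 hc).2
    have hbc : ¬ G.Adj b c := by
      obtain ⟨d, hd⟩ := hLne b hb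
      have := hall d (Finset.mem_union_right _ hd)
      subst this
      exact ((hLmem _ _).1 hd).2
    have haK : ∀ d ∈ K, d ≠ c → G.Adj a d := by
      intro d hd hdc
      by_contra h
      exact hdc (hall d (Finset.mem_union_left _ ((hLmem _ _).2 ⟨hd, h⟩)))
    have hbK : ∀ d ∈ K, d ≠ c → G.Adj b d := by
      intro d hd hdc
      by_contra h
      exact hdc (hall d (Finset.mem_union_right _ ((hLmem _ _).2 ⟨hd, h⟩)))
    have hnab : ¬ G.Adj a b := by
      intro hadj
      have hcl' := hcl (insert a (insert b (K.erase c))) (by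
        intro v hv
        simp only [Finset.mem_insert, Finset.mem_erase] at hv
        rcases hv with rfl | rfl | hv
        · exact (hHS _ ha).1
        · exact (hHS _ hb).1
        · exact hKS hv.2) (by
        rw [Finset.coe_insert, Finset.coe_insert]
        refine SimpleGraph.IsClique.insert (SimpleGraph.IsClique.insert ?_ ?_) ?_
        · exact hK.subset (by simp)
        · intro d hd _
          rw [Finset.mem_coe, Finset.mem_erase] at hd
          exact hbK d hd.2 hd.1
        · intro d hd _
          rw [Set.mem_insert_iff, Finset.mem_coe, Finset.mem_erase] at hd
          rcases hd with rfl | hd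
          · exact hadj
          · exact haK d hd.2 hd.1)
      have h1 : b ∉ K.erase c := fun h => (hHS b hb).2 (Finset.mem_of_mem_erase h)
      have h2 : a ∉ insert b (K.erase c) := by
        rw [Finset.mem_insert, not_or]
        exact ⟨hab, fun h => (hHS a ha).2 (Finset.mem_of_mem_erase h)⟩
      rw [Finset.card_insert_of_notMem h2, Finset.card_insert_of_notMem h1] at hcl'
      have := Finset.card_erase_add_one hcK
      omega
    have hothers : ∀ e ∈ H, e ≠ a → e ≠ b → ∀ d ∈ K, d ≠ c → ¬ G.Adj e d := by
      intro e he hea heb d hd hdc hadj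
      have h1 := hmiss d hd
      have h2 : ({a, b, e} : Finset V) ⊆ H.filter (fun a => d ∉ L a) := by
        intro v hv
        simp only [Finset.mem_insert, Finset.mem_singleton] at hv
        rw [Finset.mem_filter, hLmem]
        rcases hv with rfl | rfl | rfl
        · exact ⟨ha, fun h => h.2 (haK d hd hdc)⟩
        · exact ⟨hb, fun h => h.2 (hbK d hd hdc)⟩
        · exact ⟨he, fun h => h.2 hadj⟩
      have h3 := Finset.card_le_card h2
      rw [Finset.card_eq_three.2 ⟨a, b, e, hab, Ne.symm hea, Ne.symm heb, rfl⟩] at h3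
      omega
    have hKe := Finset.card_erase_add_one hcK
    have hHe : ((H.erase a).erase b).card + 2 = H.card := by
      have h1 := Finset.card_erase_add_one ha
      have h2 := Finset.card_erase_add_one (Finset.mem_erase.2 ⟨Ne.symm hab, hb⟩)
      omega
    obtain ⟨f, hf, hinj⟩ := hall_aux ((H.erase a).erase b) (K.erase c) (fun _ => K.erase c)
      (by omega) (fun _ _ => Finset.card_pos.1 (by omega))
      (fun d hd => by simp [Finset.mem_erase.1 hd])
      (fun _ _ _ _ _ => by rw [Finset.union_idempotent]; omega)
    have hmemH : ∀ e ∈ H, e ≠ a → e ≠ b → e ∈ (H.erase a).erase b := by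
      intro e he h1 h2
      simp [he, h1, h2]
    refine col_ext (by omega) hKm (fun e => if e = a ∨ e = b then c else f e) ?_ ?_ ?_
    · intro e he
      rw [← hH] at he
      by_cases h : e = a ∨ e = b
      · simp [h, hcK]
      · simp only [h, if_false]
        rw [not_or] at h
        exact Finset.mem_of_mem_erase (hf e (hmemH e he h.1 h.2))
    · intro e he
      rw [← hH] at he
      by_cases h : e = a ∨ e = b
      · simp only [h, if_true]
        rcases h with rfl | rfl
        · exact hac
        · exact hbc
      · simp only [h, if_false]
        rw [not_or] at h
        have := Finset.mem_erase.1 (hf e (hmemH e he h.1 h.2))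
        exact hothers e he h.1 h.2 _ this.2 this.1
    · intro e he g hg heg
      rw [← hH] at he hg
      by_cases h : e = a ∨ e = b <;> by_cases h' : g = a ∨ g = b <;>
        simp only [h, h', if_true, if_false]
      · exfalso
        rcases h with rfl | rfl <;> rcases h' with rfl | rfl
        · exact heg.ne rfl
        · exact hnab heg
        · exact hnab heg.symm
        · exact heg.ne rfl
      · rw [not_or] at h'
        exact (Finset.mem_erase.1 (hf g (hmemH g hg h'.1 h'.2))).1.symm
      · rw [not_or] at h
        exact (Finset.mem_erase.1 (hf e (hmemH e he h.1 h.2))).1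
      · rw [not_or] at h h'
        intro heq
        exact heg.ne (hinj e (hmemH e he h.1 h.2) g (hmemH g hg h'.1 h'.2) heq)
  push Not at htwin
  by_cases hHm : H.card ≤ m
  · obtain ⟨f, hf, hinj⟩ := hall_aux H K L (by omega) hLne hmiss htwin
    refine col_ext (by omega) hKm f ?_ ?_ ?_
    · intro a ha
      rw [← hH] at ha
      exact ((hLmem _ _).1 (hf a ha)).1
    · intro a ha
      rw [← hH] at ha
      exact ((hLmem _ _).1 (hf a ha)).2
    · intro a ha b hb hab heq
      rw [← hH] at ha hb
      exact hab.ne (hinj a ha b hb heq)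
  · obtain ⟨hm4, s, hs, t, ht, hst, hnst, hs1, ht1, hle2⟩ : m = 4 ∧ _ := by
      rcases hstr with h | h
      · exact absurd h hHm
      · exact h
    have hLs := hLcard s
    have hLt := hLcard t
    have hint : 2 ≤ (L s ∩ L t).card := by
      have h2 := Finset.card_union_add_card_inter (L s) (L t)
      have h3 : (L s ∪ L t).card ≤ m := by
        rw [← hKm]
        apply Finset.card_le_card
        intro c
        simp only [Finset.mem_union, hLmem]
        tauto
      omega
    obtain ⟨L', hL'⟩ : ∃ L' : V → Finset V, L' = fun a => if a = s then L s ∩ L t else L a :=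
      ⟨_, rfl⟩
    have hL's : L' s = L s ∩ L t := by simp [hL']
    have hL'n : ∀ a, a ≠ s → L' a = L a := by
      intro a ha
      simp [hL', ha]
    have hL'2 : ∀ a ∈ H, 2 ≤ (L' a).card := by
      intro a ha
      by_cases h : a = s
      · subst h
        rw [hL's]
        exact hint
      · rw [hL'n a h]
        have h1 := hLcard a
        have h2 := hle2 a ha
        omega
    have hL'L : ∀ a, L' a ⊆ L a := by
      intro a
      by_cases h : a = s
      · subst h
        rw [hL's]
        exact Finset.inter_subset_left
      · rw [hL'n a h]
    have hHt := Finset.card_erase_add_one ht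
    obtain ⟨f, hf, hinj⟩ := hall_aux (H.erase t) K L' (by omega)
      (fun a ha => Finset.card_pos.1 (by
        have := hL'2 a (Finset.mem_of_mem_erase ha)
        omega))
      (by
        intro c hc
        have h1 := hmiss c hc
        by_cases hct : c ∈ L t
        · refine le_trans (Finset.card_le_card ?_) h1
          intro a ha
          rw [Finset.mem_filter] at ha ⊢
          refine ⟨Finset.mem_of_mem_erase ha.1, fun h => ha.2 ?_⟩
          by_cases has : a = s
          · subst has
            rw [hL's]
            exact Finset.mem_inter.2 ⟨h, hct⟩
          · rw [hL'n a has]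
            exact h
        · have h2 : t ∈ H.filter (fun a => c ∉ L a) := Finset.mem_filter.2 ⟨ht, hct⟩
          have h3 := Finset.card_erase_add_one h2
          have h4 : (H.erase t).filter (fun a => c ∉ L' a) ⊆
              insert s ((H.filter (fun a => c ∉ L a)).erase t) := by
            intro a ha
            rw [Finset.mem_filter, Finset.mem_erase] at ha
            rw [Finset.mem_insert, Finset.mem_erase, Finset.mem_filter]
            by_cases has : a = s
            · exact Or.inl has
            · right
              rw [hL'n a has] at ha
              exact ⟨ha.1.1, ha.1.2, ha.2⟩
          have h5 := Finset.card_le_card h4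
          have h6 := Finset.card_insert_le s ((H.filter (fun a => c ∉ L a)).erase t)
          omega)
      (fun a ha b _ _ => (hL'2 a (Finset.mem_of_mem_erase ha)).trans
        (Finset.card_le_card Finset.subset_union_left))
    have hsmem : s ∈ H.erase t := Finset.mem_erase.2 ⟨hst, hs⟩
    have hfs := hf s hsmem
    rw [hL's, Finset.mem_inter] at hfs
    refine col_ext (by omega) hKm (fun e => if e = t then f s else f e) ?_ ?_ ?_
    · intro e he
      rw [← hH] at he
      by_cases h : e = t
      · simp only [h, if_true]
        exact ((hLmem _ _).1 hfs.1).1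
      · simp only [h, if_false]
        exact ((hLmem _ _).1 (hL'L _ (hf e (Finset.mem_erase.2 ⟨h, he⟩)))).1
    · intro e he
      rw [← hH] at he
      by_cases h : e = t
      · simp only [h, if_true]
        exact ((hLmem _ _).1 hfs.2).2
      · simp only [h, if_false]
        exact ((hLmem _ _).1 (hL'L _ (hf e (Finset.mem_erase.2 ⟨h, he⟩)))).2
    · intro e he g hg heg
      rw [← hH] at he hg
      by_cases h : e = t <;> by_cases h' : g = t <;> simp only [h, h', if_true, if_false]
      · subst h
        exact absurd h' heg.ne'
      · intro heq
        have := hinj s hsmem g (Finset.mem_erase.2 ⟨h', hg⟩) heq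
        subst this
        subst h
        exact hnst heg.symm
      · intro heq
        have := hinj e (Finset.mem_erase.2 ⟨h, he⟩) s hsmem heq
        subst this
        subst h'
        exact hnst heg
      · intro heq
        exact heg.ne (hinj e (Finset.mem_erase.2 ⟨h, he⟩) g (Finset.mem_erase.2 ⟨h', hg⟩) heq)

structure Cfg {V : Type*} (G : SimpleGraph V) (S : Finset V) (x y z : V)
    (Ax Ay Az Bx By Bz : Finset V) : Prop where
  cover : ∀ v ∈ S, v ∈ Ax ∨ v ∈ Ay ∨ v ∈ Az ∨ v ∈ Bx ∨ v ∈ By ∨ v ∈ Bz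
  iAx : ∀ a ∈ Ax, ∀ b ∈ Ax, ¬ G.Adj a b
  iAy : ∀ a ∈ Ay, ∀ b ∈ Ay, ¬ G.Adj a b
  iAz : ∀ a ∈ Az, ∀ b ∈ Az, ¬ G.Adj a b
  iBx : ∀ a ∈ Bx, ∀ b ∈ Bx, ¬ G.Adj a b
  iBy : ∀ a ∈ By, ∀ b ∈ By, ¬ G.Adj a b
  iBz : ∀ a ∈ Bz, ∀ b ∈ Bz, ¬ G.Adj a b
  xB : x ∈ Bx
  yB : y ∈ By
  zB : z ∈ Bz
  mAx : ∀ v ∈ Ax, v ∈ S ∧ G.Adj v x ∧ ¬ G.Adj v y ∧ ¬ G.Adj v z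
  mAy : ∀ v ∈ Ay, v ∈ S ∧ G.Adj v y ∧ ¬ G.Adj v z ∧ ¬ G.Adj v x
  mAz : ∀ v ∈ Az, v ∈ S ∧ G.Adj v z ∧ ¬ G.Adj v x ∧ ¬ G.Adj v y
  mBx : ∀ v ∈ Bx, v ∈ S ∧ ¬ G.Adj v x ∧ G.Adj v y ∧ G.Adj v z
  mBy : ∀ v ∈ By, v ∈ S ∧ ¬ G.Adj v y ∧ G.Adj v z ∧ G.Adj v x
  mBz : ∀ v ∈ Bz, v ∈ S ∧ ¬ G.Adj v z ∧ G.Adj v x ∧ G.Adj v y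
  dx : Ax.card + By.card + Bz.card ≤ 5
  dy : Ay.card + Bz.card + Bx.card ≤ 5
  dz : Az.card + Bx.card + By.card ≤ 5
  k4 : ∀ a ∈ S, ∀ b ∈ S, ∀ c ∈ S, ∀ d ∈ S, G.Adj a b → G.Adj a c → G.Adj a d → G.Adj b c →
    G.Adj b d → G.Adj c d → False

section CfgSection

variable {V : Type*} {G : SimpleGraph V} {S : Finset V} {x y z : V}
  {Ax Ay Az Bx By Bz : Finset V}

theorem Cfg.rot (h : Cfg G S x y z Ax Ay Az Bx By Bz) : Cfg G S y z x Ay Az Ax By Bz Bx where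
  cover v hv := by
    have := h.cover v hv
    tauto
  iAx := h.iAy
  iAy := h.iAz
  iAz := h.iAx
  iBx := h.iBy
  iBy := h.iBz
  iBz := h.iBx
  xB := h.yB
  yB := h.zB
  zB := h.xB
  mAx := h.mAy
  mAy := h.mAz
  mAz := h.mAx
  mBx := h.mBy
  mBy := h.mBz
  mBz := h.mBx
  dx := h.dy
  dy := h.dz
  dz := h.dx
  k4 := h.k4

theorem Cfg.col_of_empty (h : Cfg G S x y z Ax Ay Az Bx By Bz) (h1 : Ax = ∅) (h2 : Ay = ∅) :
    Col G S 4 := by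
  subst h1 h2
  refine col_four (· ∈ Az) (· ∈ Bx) (· ∈ By) (· ∈ Bz) ?_ ?_ ?_ ?_ ?_
  · intro v hv
    have := h.cover v hv
    simpa using this
  · exact fun a b ha hb => h.iAz a ha b hb
  · exact fun a b ha hb => h.iBx a ha b hb
  · exact fun a b ha hb => h.iBy a ha b hb
  · exact fun a b ha hb => h.iBz a ha b hb

theorem Cfg.col_of_two (h : Cfg G S x y z Ax Ay Az Bx By Bz) (h1 : ∀ v ∈ By, v = y)
    (h2 : ∀ v ∈ Bz, v = z) : Col G S 4 := by
  have sym : ∀ a b, G.Adj a b → G.Adj b a := fun a b h => h.symm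
  have irr : ∀ a, ¬ G.Adj a a := fun a h => h.ne rfl
  obtain ⟨cover, iAx, iAy, iAz, iBx, iBy, iBz, xB, yB, zB, mAx, mAy, mAz, mBx, mBy, mBz, -, -, -, -⟩ := h
  refine col_four (fun v => v ∈ Bx ∧ v ≠ x) (fun v => v = y ∨ v ∈ Ax) (fun v => v = z ∨ v ∈ Ay)
    (fun v => v = x ∨ v ∈ Az) ?_ ?_ ?_ ?_ ?_ <;> grind only

theorem pair_of_card {B : Finset V} {y w : V} (hc : B.card ≤ 2) (hy : y ∈ B) (hw : w ∈ B)
    (hne : w ≠ y) : ∀ v ∈ B, v = y ∨ v = w := by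
  classical
  intro v hv
  by_contra hn
  rw [not_or] at hn
  have h1 : ({y, w, v} : Finset V) ⊆ B := by
    intro a ha
    simp only [Finset.mem_insert, Finset.mem_singleton] at ha
    rcases ha with rfl | rfl | rfl <;> assumption
  have h2 := Finset.card_le_card h1
  rw [Finset.card_eq_three.2 ⟨y, w, v, hne.symm, Ne.symm hn.1, Ne.symm hn.2, rfl⟩] at h2
  omega

theorem two_le_of_pair {B : Finset V} {y w : V} (hy : y ∈ B) (hw : w ∈ B)
    (hne : w ≠ y) : 2 ≤ B.card :=
  Finset.one_lt_card.2 ⟨w, hw, y, hy, hne⟩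

theorem Cfg.col_of_one (h : Cfg G S x y z Ax Ay Az Bx By Bz) (h1 : ∀ v ∈ Bx, v = x)
    {w2 w3 : V} (h2 : w2 ∈ By) (h2' : w2 ≠ y) (h3 : w3 ∈ Bz) (h3' : w3 ≠ z) : Col G S 4 := by
  have sym : ∀ a b, G.Adj a b → G.Adj b a := fun a b h => h.symm
  have irr : ∀ a, ¬ G.Adj a a := fun a h => h.ne rfl
  have hy2 := two_le_of_pair h.yB h2 h2'
  have hz2 := two_le_of_pair h.zB h3 h3'
  have hdx := h.dx
  obtain ⟨cover, iAx, iAy, iAz, iBx, iBy, iBz, xB, yB, zB, mAx, mAy, mAz, mBx, mBy, mBz, -, -, -, k4⟩ := h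
  rcases Finset.eq_empty_or_nonempty Ax with hA | ⟨u, hu⟩
  · have hA' : ∀ v, v ∉ Ax := by simp [hA]
    clear k4 hA
    refine col_four (fun v => v ∈ By) (fun v => v ∈ Bz) (fun v => v = x ∨ v ∈ Ay)
      (fun v => v ∈ Az) ?_ ?_ ?_ ?_ ?_ <;> grind only
  · have hu1 : 1 ≤ Ax.card := Finset.card_pos.2 ⟨u, hu⟩
    have hAu : ∀ v ∈ Ax, v = u := fun v hv => Finset.card_le_one.1 (by omega) v hv u hu
    have hBy := pair_of_card (by omega) yB h2 h2'
    have hBz := pair_of_card (by omega) zB h3 h3'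
    by_cases e1 : G.Adj w2 w3
    · by_cases e2 : G.Adj u w2
      · by_cases e3 : G.Adj u w3
        · exfalso
          exact k4 x (mBx x xB).1 u (mAx u hu).1 w2 (mBy w2 h2).1 w3 (mBz w3 h3).1
            (mAx u hu).2.1.symm (mBy w2 h2).2.2.2.symm (mBz w3 h3).2.2.1.symm e2 e3 e1
        · clear k4
          refine col_four (fun v => v ∈ By) (fun v => v ∈ Bz ∨ v = u) (fun v => v = x ∨ v ∈ Ay)
            (fun v => v ∈ Az) ?_ ?_ ?_ ?_ ?_ <;> grind only
      · clear k4
        refine col_four (fun v => v ∈ By ∨ v = u) (fun v => v ∈ Bz) (fun v => v = x ∨ v ∈ Ay)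
          (fun v => v ∈ Az) ?_ ?_ ?_ ?_ ?_ <;> grind only
    · clear k4
      refine col_four (fun v => v = w2 ∨ v = w3) (fun v => v = u ∨ v = z) (fun v => v = x ∨ v ∈ Ay)
          (fun v => v = y ∨ v ∈ Az) ?_ ?_ ?_ ?_ ?_ <;> grind only

theorem Cfg.col_of_three (h : Cfg G S x y z Ax Ay Az Bx By Bz) {w w2 w3 u u2 : V}
    (h1 : w ∈ Bx) (h1' : w ≠ x)
    (h2 : w2 ∈ By) (h2' : w2 ≠ y) (h3 : w3 ∈ Bz) (h3' : w3 ≠ z) (hu : u ∈ Ax) (hu2 : u2 ∈ Ay) :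
    Col G S 4 := by
  have sym : ∀ a b, G.Adj a b → G.Adj b a := fun a b h => h.symm
  have irr : ∀ a, ¬ G.Adj a a := fun a h => h.ne rfl
  have hx2 := two_le_of_pair h.xB h1 h1'
  have hy2 := two_le_of_pair h.yB h2 h2'
  have hz2 := two_le_of_pair h.zB h3 h3'
  have hdx := h.dx
  have hdy := h.dy
  have hdz := h.dz
  obtain ⟨cover, iAx, iAy, iAz, iBx, iBy, iBz, xB, yB, zB, mAx, mAy, mAz, mBx, mBy, mBz, -, -, -, k4⟩ := h
  have hu1 : 1 ≤ Ax.card := Finset.card_pos.2 ⟨u, hu⟩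
  have hu21 : 1 ≤ Ay.card := Finset.card_pos.2 ⟨u2, hu2⟩
  have hAu : ∀ v ∈ Ax, v = u := fun v hv => Finset.card_le_one.1 (by omega) v hv u hu
  have hAu2 : ∀ v ∈ Ay, v = u2 := fun v hv => Finset.card_le_one.1 (by omega) v hv u2 hu2
  have hAz1 : ∀ a ∈ Az, ∀ b ∈ Az, a = b := Finset.card_le_one.1 (by omega)
  have hBx := pair_of_card (by omega) xB h1 h1'
  have hBy := pair_of_card (by omega) yB h2 h2'
  have hBz := pair_of_card (by omega) zB h3 h3'
  have cov : ∀ v ∈ S, v = x ∨ v = y ∨ v = z ∨ v = u ∨ v = u2 ∨ v ∈ Az ∨ v = w ∨ v = w2 ∨ v = w3 := by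
    intro v hv
    rcases cover v hv with h | h | h | h | h | h
    · simp [hAu v h]
    · simp [hAu2 v h]
    · simp [h]
    · rcases hBx v h with h | h <;> simp [h]
    · rcases hBy v h with h | h <;> simp [h]
    · rcases hBz v h with h | h <;> simp [h]
  have q1 : ¬ (G.Adj u w2 ∧ G.Adj u w3 ∧ G.Adj w2 w3) := fun ⟨a, b, c⟩ =>
    k4 x (mBx x xB).1 u (mAx u hu).1 w2 (mBy w2 h2).1 w3 (mBz w3 h3).1
      (mAx u hu).2.1.symm (mBy w2 h2).2.2.2.symm (mBz w3 h3).2.2.1.symm a b c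
  have q2 : ¬ (G.Adj u2 w ∧ G.Adj u2 w3 ∧ G.Adj w w3) := fun ⟨a, b, c⟩ =>
    k4 y (mBy y yB).1 u2 (mAy u2 hu2).1 w (mBx w h1).1 w3 (mBz w3 h3).1
      (mAy u2 hu2).2.1.symm (mBx w h1).2.2.1.symm (mBz w3 h3).2.2.2.symm a b c
  have q3 : ¬ ((∃ t ∈ Az, G.Adj t w) ∧ (∃ t ∈ Az, G.Adj t w2) ∧ G.Adj w w2) := by
    rintro ⟨⟨t, ht, a⟩, ⟨t', ht', b⟩, c⟩
    obtain rfl := hAz1 t ht t' ht'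
    exact k4 z (mBz z zB).1 t (mAz t ht).1 w (mBx w h1).1 w2 (mBy w2 h2).1
      (mAz t ht).2.1.symm (mBx w h1).2.2.2.symm (mBy w2 h2).2.2.1.symm a b c
  have q4 : ¬ (G.Adj u u2 ∧ (∃ t ∈ Az, G.Adj t u) ∧ G.Adj u w ∧ (∃ t ∈ Az, G.Adj t u2) ∧
      G.Adj u2 w ∧ (∃ t ∈ Az, G.Adj t w)) := by
    rintro ⟨a, ⟨t, ht, b⟩, c, ⟨t', ht', d⟩, e, ⟨t'', ht'', f⟩⟩
    obtain rfl := hAz1 t ht t' ht'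
    obtain rfl := hAz1 t ht t'' ht''
    exact k4 u (mAx u hu).1 u2 (mAy u2 hu2).1 t (mAz t ht).1 w (mBx w h1).1 a b.symm c d.symm e f
  have mx := mBx x xB
  have my := mBy y yB
  have mz := mBz z zB
  have mw := mBx w h1
  have mw2 := mBy w2 h2
  have mw3 := mBz w3 h3
  have mu := mAx u hu
  have mu2 := mAy u2 hu2
  by_contra hcon
  clear k4 cover iAx iAy iBx iBy iBz mAx mAy mBx mBy mBz hAu hAu2 hAz1 hBx hBy hBz
    hdx hdy hdz hx2 hy2 hz2 hu1 hu21
  have c0 : G.Adj w w2 ∨ G.Adj w w3 ∨ G.Adj w2 w3 := by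
    by_contra hn
    apply hcon
    refine col_four (fun v => v = x ∨ v ∈ Az) (fun v => v = y ∨ v = u) (fun v => v = z ∨ v = u2) (fun v => v = w ∨ v = w2 ∨ v = w3)
      ?_ ?_ ?_ ?_ ?_ <;> grind only
  have c1 : (∃ t ∈ Az, G.Adj t u2) ∨ G.Adj w w2 := by
    by_contra hn
    apply hcon
    refine col_four (fun v => v = x ∨ v = u2 ∨ v ∈ Az) (fun v => v = y ∨ v = u) (fun v => v = z ∨ v = w3) (fun v => v = w ∨ v = w2)
      ?_ ?_ ?_ ?_ ?_ <;> grind only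
  have c2 : (∃ t ∈ Az, G.Adj t u2) ∨ G.Adj w w3 := by
    by_contra hn
    apply hcon
    refine col_four (fun v => v = x ∨ v = u2 ∨ v ∈ Az) (fun v => v = y ∨ v = w2) (fun v => v = z ∨ v = u) (fun v => v = w ∨ v = w3)
      ?_ ?_ ?_ ?_ ?_ <;> grind only
  have c3 : (∃ t ∈ Az, G.Adj t w) ∨ G.Adj w2 w3 := by
    by_contra hn
    apply hcon
    refine col_four (fun v => v = x ∨ v ∈ Az ∨ v = w) (fun v => v = y ∨ v = u) (fun v => v = z ∨ v = u2) (fun v => v = w2 ∨ v = w3)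
      ?_ ?_ ?_ ?_ ?_ <;> grind only
  have c4 : (∃ t ∈ Az, G.Adj t u) ∨ G.Adj w2 w3 := by
    by_contra hn
    apply hcon
    refine col_four (fun v => v = x ∨ v = w) (fun v => v = y ∨ v = u ∨ v ∈ Az) (fun v => v = z ∨ v = u2) (fun v => v = w2 ∨ v = w3)
      ?_ ?_ ?_ ?_ ?_ <;> grind only
  have c5 : G.Adj u u2 ∨ G.Adj w2 w3 := by
    by_contra hn
    apply hcon
    refine col_four (fun v => v = x ∨ v = w) (fun v => v = y ∨ v ∈ Az) (fun v => v = z ∨ v = u ∨ v = u2) (fun v => v = w2 ∨ v = w3)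
      ?_ ?_ ?_ ?_ ?_ <;> grind only
  have c6 : (∃ t ∈ Az, G.Adj t w2) ∨ G.Adj u w := by
    by_contra hn
    apply hcon
    refine col_four (fun v => v = x ∨ v = u2) (fun v => v = y ∨ v ∈ Az ∨ v = w2) (fun v => v = z ∨ v = w3) (fun v => v = u ∨ v = w)
      ?_ ?_ ?_ ?_ ?_ <;> grind only
  have c7 : G.Adj u2 w3 ∨ G.Adj u w := by
    by_contra hn
    apply hcon
    refine col_four (fun v => v = x ∨ v ∈ Az) (fun v => v = y ∨ v = w2) (fun v => v = z ∨ v = u2 ∨ v = w3) (fun v => v = u ∨ v = w)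
      ?_ ?_ ?_ ?_ ?_ <;> grind only
  have c8 : G.Adj u2 w ∨ G.Adj u w2 := by
    by_contra hn
    apply hcon
    refine col_four (fun v => v = x ∨ v = u2 ∨ v = w) (fun v => v = y ∨ v = u ∨ v = w2) (fun v => v = z ∨ v = w3) (fun v => v ∈ Az)
      ?_ ?_ ?_ ?_ ?_ <;> grind only
  have c9 : G.Adj u w2 ∨ G.Adj u2 w3 := by
    by_contra hn
    apply hcon
    refine col_four (fun v => v = x ∨ v ∈ Az) (fun v => v = y ∨ v = u ∨ v = w2) (fun v => v = z ∨ v = u2 ∨ v = w3) (fun v => v = w)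
      ?_ ?_ ?_ ?_ ?_ <;> grind only
  have c10 : G.Adj u w2 ∨ G.Adj w w3 := by
    by_contra hn
    apply hcon
    refine col_four (fun v => v = x ∨ v ∈ Az) (fun v => v = y ∨ v = u ∨ v = w2) (fun v => v = z ∨ v = u2) (fun v => v = w ∨ v = w3)
      ?_ ?_ ?_ ?_ ?_ <;> grind only
  have c11 : G.Adj u2 w ∨ G.Adj w2 w3 := by
    by_contra hn
    apply hcon
    refine col_four (fun v => v = x ∨ v = u2 ∨ v = w) (fun v => v = y ∨ v ∈ Az) (fun v => v = z ∨ v = u) (fun v => v = w2 ∨ v = w3)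
      ?_ ?_ ?_ ?_ ?_ <;> grind only
  have c12 : G.Adj u w3 ∨ (∃ t ∈ Az, G.Adj t w) := by
    by_contra hn
    apply hcon
    refine col_four (fun v => v = x ∨ v = u2) (fun v => v = y ∨ v = w2) (fun v => v = z ∨ v = u ∨ v = w3) (fun v => v ∈ Az ∨ v = w)
      ?_ ?_ ?_ ?_ ?_ <;> grind only
  have c13 : (∃ t ∈ Az, G.Adj t w2) ∨ G.Adj u w3 := by
    by_contra hn
    apply hcon
    refine col_four (fun v => v = x ∨ v = u2) (fun v => v = y ∨ v ∈ Az ∨ v = w2) (fun v => v = z ∨ v = u ∨ v = w3) (fun v => v = w)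
      ?_ ?_ ?_ ?_ ?_ <;> grind only
  have c14 : G.Adj u w3 ∨ G.Adj w w2 := by
    by_contra hn
    apply hcon
    refine col_four (fun v => v = x ∨ v = u2) (fun v => v = y ∨ v ∈ Az) (fun v => v = z ∨ v = u ∨ v = w3) (fun v => v = w ∨ v = w2)
      ?_ ?_ ?_ ?_ ?_ <;> grind only
  have c15 : G.Adj u2 w3 ∨ (∃ t ∈ Az, G.Adj t w2) := by
    by_contra hn
    apply hcon
    refine col_four (fun v => v = x ∨ v = w) (fun v => v = y ∨ v = u) (fun v => v = z ∨ v = u2 ∨ v = w3) (fun v => v ∈ Az ∨ v = w2)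
      ?_ ?_ ?_ ?_ ?_ <;> grind only
  clear cov iAz mAz mx my mz mw mw2 mw3 mu mu2 sym irr
  generalize (∃ t ∈ Az, G.Adj t u) = e35 at *
  generalize (∃ t ∈ Az, G.Adj t u2) = e45 at *
  generalize (∃ t ∈ Az, G.Adj t w) = e56 at *
  generalize (∃ t ∈ Az, G.Adj t w2) = e57 at *
  generalize (∃ t ∈ Az, G.Adj t w3) = e58 at *
  generalize G.Adj u u2 = e34 at *
  grind only

theorem Cfg.col (h : Cfg G S x y z Ax Ay Az Bx By Bz) : Col G S 4 := by
  have hr := h.rot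
  have hr2 := hr.rot
  by_cases hx : ∃ w ∈ Bx, w ≠ x
  · by_cases hy : ∃ w ∈ By, w ≠ y
    · by_cases hz : ∃ w ∈ Bz, w ≠ z
      · obtain ⟨w, hw, hw'⟩ := hx
        obtain ⟨w2, hw2, hw2'⟩ := hy
        obtain ⟨w3, hw3, hw3'⟩ := hz
        rcases Finset.eq_empty_or_nonempty Ax with h1 | ⟨u, hu⟩
        · rcases Finset.eq_empty_or_nonempty Ay with h2 | ⟨u2, hu2⟩
          · exact h.col_of_empty h1 h2
          · rcases Finset.eq_empty_or_nonempty Az with h3 | ⟨u3, hu3⟩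
            · exact hr2.col_of_empty h3 h1
            · exact hr.col_of_three hw2 hw2' hw3 hw3' hw hw' hu2 hu3
        · rcases Finset.eq_empty_or_nonempty Ay with h2 | ⟨u2, hu2⟩
          · rcases Finset.eq_empty_or_nonempty Az with h3 | ⟨u3, hu3⟩
            · exact hr.col_of_empty h2 h3
            · exact hr2.col_of_three hw3 hw3' hw hw' hw2 hw2' hu3 hu
          · exact h.col_of_three hw hw' hw2 hw2' hw3 hw3' hu hu2
      · push Not at hz
        obtain ⟨w, hw, hw'⟩ := hx
        obtain ⟨w2, hw2, hw2'⟩ := hy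
        exact hr2.col_of_one hz hw hw' hw2 hw2'
    · push Not at hy
      by_cases hz : ∃ w ∈ Bz, w ≠ z
      · obtain ⟨w, hw, hw'⟩ := hx
        obtain ⟨w3, hw3, hw3'⟩ := hz
        exact hr.col_of_one hy hw3 hw3' hw hw'
      · push Not at hz
        exact h.col_of_two hy hz
  · push Not at hx
    by_cases hy : ∃ w ∈ By, w ≠ y
    · by_cases hz : ∃ w ∈ Bz, w ≠ z
      · obtain ⟨w2, hw2, hw2'⟩ := hy
        obtain ⟨w3, hw3, hw3'⟩ := hz
        exact h.col_of_one hx hw2 hw2' hw3 hw3'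
      · push Not at hz
        exact hr.col_of_two hz hx
    · push Not at hy
      exact hr2.col_of_two hx hy

end CfgSection

theorem tri_case {V : Type*} [DecidableEq V] {G : SimpleGraph V} (hfree : TwoK2Free G)
    {S : Finset V} (hdeg : ∀ v ∈ S, dg G S v ≤ 5) (hmin : ∀ v ∈ S, 4 ≤ dg G S v)
    (k4 : ∀ a ∈ S, ∀ b ∈ S, ∀ c ∈ S, ∀ d ∈ S, G.Adj a b → G.Adj a c → G.Adj a d → G.Adj b c →
      G.Adj b d → G.Adj c d → False)
    {x y z : V} (hx : x ∈ S) (hy : y ∈ S) (hz : z ∈ S) (hxy : G.Adj x y) (hyz : G.Adj y z)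
    (hzx : G.Adj z x) : Col G S 4 := by
  classical
  obtain ⟨A, hA⟩ : ∃ A : V → V → V → Finset V, ∀ x y z v, v ∈ A x y z ↔
      v ∈ S ∧ G.Adj v x ∧ ¬ G.Adj v y ∧ ¬ G.Adj v z :=
    ⟨fun x y z => S.filter (fun v => G.Adj v x ∧ ¬ G.Adj v y ∧ ¬ G.Adj v z), by simp⟩
  obtain ⟨B, hB⟩ : ∃ B : V → V → V → Finset V, ∀ x y z v, v ∈ B x y z ↔
      v ∈ S ∧ ¬ G.Adj v x ∧ G.Adj v y ∧ G.Adj v z :=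
    ⟨fun x y z => S.filter (fun v => ¬ G.Adj v x ∧ G.Adj v y ∧ G.Adj v z), by simp⟩
  have irr : ∀ a, ¬ G.Adj a a := fun a h => h.ne rfl
  have iA : ∀ x y z, G.Adj y z → ∀ a ∈ A x y z, ∀ b ∈ A x y z, ¬ G.Adj a b := by
    intro x y z hyz a ha b hb hab
    rw [hA] at ha hb
    refine tk hfree hab hyz ha.2.2.1 ha.2.2.2 hb.2.2.1 hb.2.2.2 ?_ ?_ ?_ ?_
    · rintro rfl; exact ha.2.2.2 hyz
    · rintro rfl; exact ha.2.2.1 hyz.symm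
    · rintro rfl; exact hb.2.2.2 hyz
    · rintro rfl; exact hb.2.2.1 hyz.symm
  have iB : ∀ x y z, y ∈ S → z ∈ S → G.Adj y z → ∀ a ∈ B x y z, ∀ b ∈ B x y z, ¬ G.Adj a b := by
    intro x y z hy hz hyz a ha b hb hab
    rw [hB] at ha hb
    exact k4 a ha.1 b hb.1 y hy z hz hab ha.2.2.1 ha.2.2.2 hb.2.2.1 hb.2.2.2 hyz
  have dd : ∀ x y z, x ∈ S →
      (A x y z).card + (B y z x).card + (B z x y).card ≤ 5 := by
    intro x y z hx
    have h1 : Disjoint (A x y z) (B y z x) := by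
      rw [Finset.disjoint_left]
      intro v h1 h2
      rw [hA] at h1
      rw [hB] at h2
      tauto
    have h2 : Disjoint (A x y z ∪ B y z x) (B z x y) := by
      rw [Finset.disjoint_left]
      intro v h1 h2
      rw [Finset.mem_union, hA, hB] at h1
      rw [hB] at h2
      tauto
    rw [← Finset.card_union_of_disjoint h1, ← Finset.card_union_of_disjoint h2]
    refine le_trans (Finset.card_le_card ?_) (hdeg x hx)
    intro v hv
    rw [Finset.mem_union, Finset.mem_union, hA, hB, hB] at hv
    rw [Finset.mem_filter, G.adj_comm]
    tauto
  have cov : ∀ v ∈ S, (¬ G.Adj v x ∧ ¬ G.Adj v y ∧ ¬ G.Adj v z) ∨ v ∈ A x y z ∨ v ∈ A y z x ∨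
      v ∈ A z x y ∨ v ∈ B x y z ∨ v ∈ B y z x ∨ v ∈ B z x y := by
    intro v hv
    simp only [hA, hB]
    have : ¬ (G.Adj v x ∧ G.Adj v y ∧ G.Adj v z) := fun ⟨a, b, c⟩ =>
      k4 v hv x hx y hy z hz a b c hxy hzx.symm hyz
    tauto
  have dx := dd x y z hx
  have dy := dd y z x hy
  have dz := dd z x y hz
  have xB : x ∈ B x y z := (hB _ _ _ _).2 ⟨hx, irr x, hxy, hzx.symm⟩
  have yB : y ∈ B y z x := (hB _ _ _ _).2 ⟨hy, irr y, hyz, hxy.symm⟩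
  have zB : z ∈ B z x y := (hB _ _ _ _).2 ⟨hz, irr z, hzx, hyz.symm⟩
  by_cases hZ : ∃ t ∈ S, ¬ G.Adj t x ∧ ¬ G.Adj t y ∧ ¬ G.Adj t z
  · -- neighbours of `Z`-vertices lie in the `B` sets
    have hnb : ∀ x y z, G.Adj y z → ∀ t, (¬ G.Adj t x ∧ ¬ G.Adj t y ∧ ¬ G.Adj t z) →
        ∀ v, G.Adj t v → ¬ G.Adj v y → ¬ G.Adj v z → False := by
      intro x y z hyz t ht v htv h1 h2
      refine tk hfree htv hyz ht.2.1 ht.2.2 h1 h2 ?_ ?_ ?_ ?_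
      · rintro rfl; exact ht.2.2 hyz
      · rintro rfl; exact ht.2.1 hyz.symm
      · rintro rfl; exact h2 hyz
      · rintro rfl; exact h1 hyz.symm
    have hbig : 7 ≤ (B x y z).card + (B y z x).card + (B z x y).card := by
      obtain ⟨t, ht, htn⟩ := hZ
      have h1 := hmin t ht
      have h2 : S.filter (fun u => G.Adj t u) ⊆
          (B x y z).erase x ∪ ((B y z x).erase y ∪ (B z x y).erase z) := by
        intro v hv
        rw [Finset.mem_filter] at hv
        have n1 := hnb x y z hyz t htn v hv.2
        have n2 := hnb y z x hzx t ⟨htn.2.1, htn.2.2, htn.1⟩ v hv.2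
        have n3 := hnb z x y hxy t ⟨htn.2.2, htn.1, htn.2.1⟩ v hv.2
        have h3 : v ≠ x := by rintro rfl; exact htn.1 hv.2
        have h4 : v ≠ y := by rintro rfl; exact htn.2.1 hv.2
        have h5 : v ≠ z := by rintro rfl; exact htn.2.2 hv.2
        have h6 := cov v hv.1
        simp only [Finset.mem_union, Finset.mem_erase]
        simp only [hA] at h6
        rcases h6 with h | h | h | h | h | h | h
        · exact (n1 h.2.1 h.2.2).elim
        · exact (n1 h.2.2.1 h.2.2.2).elim
        · exact (n2 h.2.2.1 h.2.2.2).elim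
        · exact (n3 h.2.2.1 h.2.2.2).elim
        · exact Or.inl ⟨h3, h⟩
        · exact Or.inr (Or.inl ⟨h4, h⟩)
        · exact Or.inr (Or.inr ⟨h5, h⟩)
      have h3 := Finset.card_le_card h2
      have h4 := Finset.card_union_le ((B x y z).erase x) ((B y z x).erase y ∪ (B z x y).erase z)
      have h5 := Finset.card_union_le ((B y z x).erase y) ((B z x y).erase z)
      have h6 := Finset.card_erase_add_one xB
      have h7 := Finset.card_erase_add_one yB
      have h8 := Finset.card_erase_add_one zB
      unfold dg at h1
      omega
    have hA1 : (A x y z ∪ (A y z x ∪ A z x y)).card ≤ 1 := by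
      have h4 := Finset.card_union_le (A x y z) (A y z x ∪ A z x y)
      have h5 := Finset.card_union_le (A y z x) (A z x y)
      omega
    rw [Finset.card_le_one] at hA1
    refine col_four (· ∈ B x y z) (· ∈ B y z x) (· ∈ B z x y)
      (fun v => (¬ G.Adj v x ∧ ¬ G.Adj v y ∧ ¬ G.Adj v z) ∨
        v ∈ A x y z ∪ (A y z x ∪ A z x y)) ?_ ?_ ?_ ?_ ?_
    · intro v hv
      simp only [Finset.mem_union]
      rcases cov v hv with h | h | h | h | h | h | h
      · exact Or.inr (Or.inr (Or.inr (Or.inl h)))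
      · exact Or.inr (Or.inr (Or.inr (Or.inr (Or.inl h))))
      · exact Or.inr (Or.inr (Or.inr (Or.inr (Or.inr (Or.inl h)))))
      · exact Or.inr (Or.inr (Or.inr (Or.inr (Or.inr (Or.inr h)))))
      · exact Or.inl h
      · exact Or.inr (Or.inl h)
      · exact Or.inr (Or.inr (Or.inl h))
    · exact fun a b ha hb => iB x y z hy hz hyz a ha b hb
    · exact fun a b ha hb => iB y z x hz hx hzx a ha b hb
    · exact fun a b ha hb => iB z x y hx hy hxy a ha b hb
    · have main : ∀ t v, (¬ G.Adj t x ∧ ¬ G.Adj t y ∧ ¬ G.Adj t z) →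
          ((¬ G.Adj v x ∧ ¬ G.Adj v y ∧ ¬ G.Adj v z) ∨ v ∈ A x y z ∪ (A y z x ∪ A z x y)) →
          ¬ G.Adj t v := by
        intro t v ht hv htv
        have n1 := hnb x y z hyz t ht v htv
        have n2 := hnb y z x hzx t ⟨ht.2.1, ht.2.2, ht.1⟩ v htv
        have n3 := hnb z x y hxy t ⟨ht.2.2, ht.1, ht.2.1⟩ v htv
        simp only [Finset.mem_union, hA] at hv
        rcases hv with h | h | h | h
        · exact n1 h.2.1 h.2.2
        · exact n1 h.2.2.1 h.2.2.2
        · exact n2 h.2.2.1 h.2.2.2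
        · exact n3 h.2.2.1 h.2.2.2
      intro a b ha hb hab
      rcases ha with h | h
      · exact main a b h hb hab
      · rcases hb with h' | h'
        · exact main b a h' (Or.inr h) hab.symm
        · exact hab.ne (hA1 a h b h')
  · push Not at hZ
    have cfg : Cfg G S x y z (A x y z) (A y z x) (A z x y) (B x y z) (B y z x) (B z x y) :=
      { cover := fun v hv => by
          rcases cov v hv with h | h
          · exact absurd h.2.2 (not_not.2 (hZ v hv h.1 h.2.1))
          · exact h
        iAx := iA x y z hyz
        iAy := iA y z x hzx
        iAz := iA z x y hxy
        iBx := iB x y z hy hz hyz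
        iBy := iB y z x hz hx hzx
        iBz := iB z x y hx hy hxy
        xB := xB
        yB := yB
        zB := zB
        mAx := fun v hv => (hA _ _ _ _).1 hv
        mAy := fun v hv => (hA _ _ _ _).1 hv
        mAz := fun v hv => (hA _ _ _ _).1 hv
        mBx := fun v hv => (hB _ _ _ _).1 hv
        mBy := fun v hv => (hB _ _ _ _).1 hv
        mBz := fun v hv => (hB _ _ _ _).1 hv
        dx := dx
        dy := by omega
        dz := by omega
        k4 := k4 }
    exact cfg.col

theorem trianglefree_case {V : Type*} {G : SimpleGraph V} (hfree : TwoK2Free G)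
    {S : Finset V}
    (k3 : ∀ a ∈ S, ∀ b ∈ S, ∀ c ∈ S, G.Adj a b → G.Adj b c → G.Adj c a → False) :
    Col G S 4 := by
  by_cases he : ∃ u ∈ S, ∃ v ∈ S, G.Adj u v
  · obtain ⟨u, hu, v, hv, huv⟩ := he
    refine col_four (fun w => w ∈ S ∧ G.Adj w u) (fun w => w ∈ S ∧ G.Adj w v)
      (fun w => ¬ G.Adj w u ∧ ¬ G.Adj w v) (fun _ => False) ?_ ?_ ?_ ?_ ?_
    · intro w hw
      tauto
    · intro a b ha hb hab
      exact k3 a ha.1 b hb.1 u hu hab hb.2 ha.2.symm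
    · intro a b ha hb hab
      exact k3 a ha.1 b hb.1 v hv hab hb.2 ha.2.symm
    · intro a b ha hb hab
      refine tk hfree hab huv ha.1 ha.2 hb.1 hb.2 ?_ ?_ ?_ ?_
      · rintro rfl; exact ha.2 huv
      · rintro rfl; exact ha.1 huv.symm
      · rintro rfl; exact hb.2 huv
      · rintro rfl; exact hb.1 huv.symm
    · simp
  · push Not at he
    exact ⟨fun _ => 0, fun u hu v hv h => absurd h (he u hu v hv)⟩

theorem dg_mono {V : Type*} {G : SimpleGraph V} {S T : Finset V} (h : S ⊆ T) (v : V) :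
    dg G S v ≤ dg G T v := by
  classical
  exact Finset.card_le_card (Finset.filter_subset_filter _ h)

theorem ind_aux {V : Type*} [DecidableEq V] {G : SimpleGraph V} (hfree : TwoK2Free G) (m : ℕ)
    (hm : 4 ≤ m)
    (core : ∀ S : Finset V, (∀ v ∈ S, dg G S v ≤ m + 1) → (∀ v ∈ S, m ≤ dg G S v) →
      (∀ C ⊆ S, G.IsClique (C : Set V) → C.card < m) → Col G S m) :
    ∀ S : Finset V, (∀ v ∈ S, dg G S v ≤ m + 1) →
      (∀ C ⊆ S, G.IsClique (C : Set V) → C.card ≤ m) → Col G S m := by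
  classical
  intro S
  induction S using Finset.strongInduction with
  | H S ih =>
    intro hdeg hcl
    by_cases hmin : ∀ v ∈ S, m ≤ dg G S v
    · by_cases hc : ∀ C ⊆ S, G.IsClique (C : Set V) → C.card < m
      · exact core S hdeg hmin hc
      · push Not at hc
        obtain ⟨K, hKS, hK, hKm⟩ := hc
        exact clique_case hfree hm hdeg hmin hcl hKS hK (le_antisymm (hcl K hKS hK) hKm)
    · push Not at hmin
      obtain ⟨v, hv, hlt⟩ := hmin
      obtain ⟨f, hf⟩ := ih (S.erase v) (Finset.erase_ssubset hv)
        (fun u hu => (dg_mono (Finset.erase_subset v S) u).trans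
          (hdeg u (Finset.mem_of_mem_erase hu)))
        (fun C hC => hcl C (hC.trans (Finset.erase_subset v S)))
      obtain ⟨c, hc⟩ : ∃ c : Fin m, c ∉ (S.filter (fun u => G.Adj v u)).image f := by
        by_contra hcon
        push Not at hcon
        have h1 : (Finset.univ : Finset (Fin m)) ⊆ (S.filter (fun u => G.Adj v u)).image f :=
          fun c _ => hcon c
        have h2 := Finset.card_le_card h1
        have h3 := Finset.card_image_le (s := S.filter (fun u => G.Adj v u)) (f := f)
        rw [Finset.card_univ, Fintype.card_fin] at h2
        unfold dg at hlt
        omega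
      have hc' : ∀ u ∈ S, G.Adj v u → f u ≠ c := by
        intro u hu hvu h
        exact hc (Finset.mem_image.2 ⟨u, Finset.mem_filter.2 ⟨hu, hvu⟩, h⟩)
      refine ⟨fun u => if u = v then c else f u, ?_⟩
      intro a ha b hb hab
      by_cases h1 : a = v <;> by_cases h2 : b = v <;> simp only [h1, h2, if_true, if_false]
      · subst h1
        exact absurd h2 hab.ne'
      · subst h1
        exact (hc' b hb hab).symm
      · subst h2
        exact hc' a ha hab.symm
      · exact hf a (Finset.mem_erase.2 ⟨h1, ha⟩) b (Finset.mem_erase.2 ⟨h2, hb⟩) hab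

theorem exists_max_indep {V : Type*} [DecidableEq V] (G : SimpleGraph V) (S : Finset V) :
    ∃ I ⊆ S, (∀ a ∈ I, ∀ b ∈ I, ¬ G.Adj a b) ∧ ∀ v ∈ S, v ∉ I → ∃ a ∈ I, G.Adj v a := by
  classical
  obtain ⟨F, hF⟩ : ∃ F : Finset (Finset V), ∀ I, I ∈ F ↔
      I ⊆ S ∧ ∀ a ∈ I, ∀ b ∈ I, ¬ G.Adj a b :=
    ⟨S.powerset.filter (fun I => ∀ a ∈ I, ∀ b ∈ I, ¬ G.Adj a b), by simp⟩
  obtain ⟨I, hI, hmax⟩ := Finset.exists_max_image F Finset.card ⟨∅, by simp [hF]⟩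
  rw [hF] at hI
  refine ⟨I, hI.1, hI.2, ?_⟩
  intro v hv hvI
  by_contra hcon
  push Not at hcon
  have h1 := hmax (insert v I) (by
    rw [hF]
    refine ⟨Finset.insert_subset hv hI.1, ?_⟩
    intro a ha b hb hab
    rw [Finset.mem_insert] at ha hb
    rcases ha with rfl | ha
    · rcases hb with rfl | hb
      · exact hab.ne rfl
      · exact hcon b hb hab
    · rcases hb with rfl | hb
      · exact hcon a ha hab.symm
      · exact hI.2 a ha b hb hab)
  rw [Finset.card_insert_of_notMem hvI] at h1
  omega

theorem main_aux {V : Type*} [DecidableEq V] {G : SimpleGraph V} (hfree : TwoK2Free G) (m : ℕ)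
    (hm : 4 ≤ m) : ∀ S : Finset V, (∀ v ∈ S, dg G S v ≤ m + 1) →
      (∀ C ⊆ S, G.IsClique (C : Set V) → C.card ≤ m) → Col G S m := by
  classical
  induction m, hm using Nat.le_induction with
  | base =>
    refine ind_aux hfree 4 le_rfl ?_
    intro S hdeg hmin hcl
    have k4 : ∀ a ∈ S, ∀ b ∈ S, ∀ c ∈ S, ∀ d ∈ S, G.Adj a b → G.Adj a c → G.Adj a d →
        G.Adj b c → G.Adj b d → G.Adj c d → False := by
      intro a ha b hb c hc d hd hab hac had hbc hbd hcd
      have h2 := hcl {a, b, c, d} (by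
        intro v hv
        simp only [Finset.mem_insert, Finset.mem_singleton] at hv
        rcases hv with rfl | rfl | rfl | rfl <;> assumption) (by
        intro u hu v hv huv
        simp only [Finset.coe_insert, Finset.coe_singleton, Set.mem_insert_iff,
          Set.mem_singleton_iff] at hu hv
        rcases hu with rfl | rfl | rfl | rfl <;> rcases hv with rfl | rfl | rfl | rfl <;>
          first
          | exact absurd rfl huv
          | assumption
          | (apply SimpleGraph.Adj.symm; assumption))
      rw [Finset.card_insert_of_notMem (by simp [hab.ne, hac.ne, had.ne]),
        Finset.card_insert_of_notMem (by simp [hbc.ne, hbd.ne]),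
        Finset.card_insert_of_notMem (by simp [hcd.ne]), Finset.card_singleton] at h2
      omega
    by_cases k3 : ∀ a ∈ S, ∀ b ∈ S, ∀ c ∈ S, G.Adj a b → G.Adj b c → G.Adj c a → False
    · exact trianglefree_case hfree k3
    · push Not at k3
      obtain ⟨a, ha, b, hb, c, hc, hab, hbc, hca, -⟩ := k3
      exact tri_case hfree hdeg hmin k4 ha hb hc hab hbc hca
  | succ m hm IH =>
    refine ind_aux hfree (m + 1) (by omega) ?_
    intro S hdeg hmin hcl
    obtain ⟨I, hIS, hI, hmax⟩ := exists_max_indep G S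
    obtain ⟨f, hf⟩ := IH (S \ I) (by
        intro v hv
        rw [Finset.mem_sdiff] at hv
        obtain ⟨a, ha, hva⟩ := hmax v hv.1 hv.2
        have h1 := dg_union (G := G) hIS v
        have h2 := hdeg v hv.1
        have h3 : 0 < dg G I v := Finset.card_pos.2 ⟨a, Finset.mem_filter.2 ⟨ha, hva⟩⟩
        omega)
      (fun C hC hcC => Nat.lt_succ_iff.1 (hcl C (hC.trans Finset.sdiff_subset) hcC))
    refine ⟨fun v => if v ∈ I then Fin.last m else (f v).castSucc, ?_⟩
    intro a ha b hb hab
    by_cases h1 : a ∈ I <;> by_cases h2 : b ∈ I <;> simp only [h1, h2, if_true, if_false]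
    · exact absurd hab (hI a h1 b h2)
    · exact (Fin.castSucc_ne_last _).symm
    · exact Fin.castSucc_ne_last _
    · intro heq
      exact hf a (Finset.mem_sdiff.2 ⟨ha, h1⟩) b (Finset.mem_sdiff.2 ⟨hb, h2⟩) hab
        (Fin.castSucc_injective m heq)

theorem twoK2Free_cliqueNum_ge_of_chromatic_eq_maxDegree
    {V : Type*} [Fintype V] (G : SimpleGraph V) [DecidableRel G.Adj]
    (hfree : TwoK2Free G) (hΔ : 5 ≤ G.maxDegree)
    (hχ : G.chromaticNumber = (G.maxDegree : ℕ)) :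
    G.maxDegree ≤ G.cliqueNum := by
  classical
  by_contra hlt
  obtain ⟨m, hm⟩ : ∃ m, G.maxDegree = m + 1 := ⟨G.maxDegree - 1, by omega⟩
  obtain ⟨f, hf⟩ := main_aux hfree m (by omega) Finset.univ (by
      intro v _
      rw [← hm]
      refine le_trans (le_of_eq ?_) (G.degree_le_maxDegree v)
      unfold dg
      rw [← G.card_neighborFinset_eq_degree]
      congr 1
      ext u
      simp) (by
      intro C _ hC
      have := hC.card_le_cliqueNum
      omega)
  have hcol : G.Colorable m := ⟨SimpleGraph.Coloring.mk f (fun {u v} h =>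
    hf u (Finset.mem_univ u) v (Finset.mem_univ v) h)⟩
  have h1 := hcol.chromaticNumber_le
  rw [hχ, hm] at h1
  have h2 : m + 1 ≤ m := by exact_mod_cast h1
  omega
end

section
/- Let G be a finite simple 2K2-free graph that is triangle-free (ω(G) = 2) and satisfies χ(G) = 3. Then G contains an induced cycle of length 5. -/
theorem twoK2Free_triangleFree_chromatic_three_has_induced_C5
    {V : Type*} [Fintype V] (G : SimpleGraph V)
    (hfree : TwoK2Free G) (hω : G.cliqueNum = 2)
    (hχ : G.chromaticNumber = 3) :
    Nonempty (SimpleGraph.cycleGraph 5 ↪g G) := by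
  classical
  have tri : ∀ x y z, G.Adj x y → G.Adj y z → G.Adj x z → False := by
    intro x y z h1 h2 h3
    have hc : G.IsNClique 3 {x, y, z} := SimpleGraph.is3Clique_triple_iff.2 ⟨h1, h3, h2⟩
    have := hc.isClique.card_le_cliqueNum
    rw [hc.card_eq, hω] at this
    omega
  have hn : ¬ G.Colorable 2 := by
    intro h
    have := h.chromaticNumber_le
    rw [hχ] at this
    exact absurd this (by decide)
  have k2 : ∀ a b c d, G.Adj a b → G.Adj c d → ¬ G.Adj a c → ¬ G.Adj a d →
      ¬ G.Adj b c → ¬ G.Adj b d → False := by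
    intro a b c d h1 h2 h3 h4 h5 h6
    refine hfree ⟨a, b, c, d, h1.ne, ?_, ?_, ?_, ?_, h2.ne, h1, h2, h3, h4, h5, h6⟩
    · rintro rfl; exact h4 h2
    · rintro rfl; exact h3 h2.symm
    · rintro rfl; exact h6 h2
    · rintro rfl; exact h5 h2.symm
  by_contra hC
  have c5 : ∀ a x r y b, G.Adj a x → G.Adj x r → G.Adj r y → G.Adj y b → G.Adj b a →
      ¬ G.Adj a r → ¬ G.Adj b r → False := by
    intro a x r y b h1 h2 h3 h4 h5 n1 n2
    have n3 : ¬ G.Adj x y := fun h => tri x r y h2 h3 h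
    have n4 : ¬ G.Adj a y := fun h => tri b a y h5 h h4.symm
    have n5 : ¬ G.Adj x b := fun h => tri b a x h5 h1 h.symm
    apply hC
    have key : ∀ i j : Fin 5, G.Adj (![a, x, r, y, b] i) (![a, x, r, y, b] j) ↔
        (SimpleGraph.cycleGraph 5).Adj i j := by
      intro i j
      have e : (SimpleGraph.cycleGraph 5).Adj i j ↔ (i - j = 1 ∨ j - i = 1) := by
        rw [SimpleGraph.cycleGraph_adj]
      rw [e]
      fin_cases i <;> fin_cases j <;>
        simp [h1, h2, h3, h4, h5, n1, n2, n3, n4, n5, h1.symm, h2.symm, h3.symm, h4.symm,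
          h5.symm, G.adj_comm r a, G.adj_comm r b, G.adj_comm y x, G.adj_comm y a,
          G.adj_comm b x] <;> decide
    have inj : Function.Injective ![a, x, r, y, b] := by
      intro i j hij
      have hh : ∀ k, (SimpleGraph.cycleGraph 5).Adj i k ↔ (SimpleGraph.cycleGraph 5).Adj j k := by
        intro k
        rw [← key, ← key, hij]
      clear hij
      simp only [SimpleGraph.cycleGraph_adj] at hh
      revert i j
      decide
    exact ⟨⟨⟨_, inj⟩, fun {i j} => key i j⟩⟩
  apply hn
  by_cases he : ∃ a b, G.Adj a b
  · obtain ⟨a, b, hab⟩ := he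
    let P : V → Prop := fun v => G.Adj b v ∨ (¬ G.Adj a v ∧ ∃ x, G.Adj a x ∧ G.Adj x v)
    have main : ∀ u v, G.Adj u v → (P u ↔ P v) → False := by
      intro u v huv h
      have t1 : ¬ (G.Adj a u ∧ G.Adj a v) := fun h => tri a u v h.1 huv h.2
      have t2 : ¬ (G.Adj b u ∧ G.Adj b v) := fun h => tri b u v h.1 huv h.2
      have t3 : ¬ (¬ G.Adj a u ∧ ¬ G.Adj a v ∧ ¬ G.Adj b u ∧ ¬ G.Adj b v) :=
        fun h => k2 a b u v hab huv h.1 h.2.1 h.2.2.1 h.2.2.2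
      have t4 : G.Adj a u → ∃ x, G.Adj a x ∧ G.Adj x v := fun h => ⟨u, h, huv⟩
      have t5 : G.Adj a v → ∃ x, G.Adj a x ∧ G.Adj x u := fun h => ⟨v, h, huv.symm⟩
      have t6 : ¬ (G.Adj b u ∧ ¬ G.Adj b v ∧ ¬ G.Adj a v ∧ ∃ x, G.Adj a x ∧ G.Adj x v) := by
        rintro ⟨h1, h2, h3, x, h4, h5⟩
        exact c5 a x v u b h4 h5 huv.symm h1.symm hab.symm h3 h2
      have t7 : ¬ (G.Adj b v ∧ ¬ G.Adj b u ∧ ¬ G.Adj a u ∧ ∃ x, G.Adj a x ∧ G.Adj x u) := by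
        rintro ⟨h1, h2, h3, x, h4, h5⟩
        exact c5 a x u v b h4 h5 huv h1.symm hab.symm h3 h2
      simp only [P] at h
      clear_value P
      clear tri k2 c5 hn hC hfree
      generalize (∃ x, G.Adj a x ∧ G.Adj x v) = X at *
      generalize (∃ x, G.Adj a x ∧ G.Adj x u) = Y at *
      grind
    let C : G.Coloring Bool := SimpleGraph.Coloring.mk (fun v => decide (P v)) (by
      intro u v huv h
      exact main u v huv (by simpa using h))
    simpa using C.colorable
  · exact ⟨SimpleGraph.Coloring.mk (fun _ => 0) (fun {u v} h => (he ⟨u, v, h⟩).elim)⟩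
end

section
/- Let G be a finite simple 2K2-free triangle-free graph (ω(G) ≤ 2) with maximum degree Δ(G) ≥ 4. Then χ(G) ≤ Δ(G) − 1; in particular, if Δ(G) = 4 then G is 3-colorable. -/
theorem twoK2Free_triangleFree_chromatic_le_maxDegree_sub_one
    {V : Type*} [Fintype V] (G : SimpleGraph V) [DecidableRel G.Adj]
    (hfree : TwoK2Free G) (hω : G.cliqueNum ≤ 2) (hΔ : 4 ≤ G.maxDegree) :
    G.chromaticNumber ≤ (G.maxDegree - 1 : ℕ) ∧
      (G.maxDegree = 4 → G.Colorable 3) := by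
  classical
  have htri : ∀ x y z, G.Adj x y → G.Adj x z → G.Adj y z → False := by
    intro x y z hxy hxz hyz
    have h3 : G.IsNClique 3 {x, y, z} := SimpleGraph.is3Clique_triple_iff.2 ⟨hxy, hxz, hyz⟩
    have := h3.isClique.card_le_cliqueNum
    rw [h3.card_eq] at this
    omega
  have h3 : G.Colorable 3 := by
    by_cases he : ∃ a b, G.Adj a b
    · obtain ⟨a, b, hab⟩ := he
      -- colour classes: N(a), N(b), and the common non-neighbours
      refine ⟨SimpleGraph.Coloring.mk
        (fun v => if G.Adj a v then (0 : Fin 3) else if G.Adj b v then 1 else 2) ?_⟩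
      intro v w hvw heq
      by_cases hav : G.Adj a v <;> by_cases haw : G.Adj a w <;>
        by_cases hbv : G.Adj b v <;> by_cases hbw : G.Adj b w <;>
        simp [hav, haw, hbv, hbw] at heq <;>
        first
        | exact htri a v w hav haw hvw
        | exact htri b v w hbv hbw hvw
        | skip
      refine hfree ⟨a, b, v, w, hab.ne, ?_, ?_, ?_, ?_, hvw.ne, hab, hvw, hav, haw, hbv, hbw⟩
      · rintro rfl; exact hbv hab.symm
      · rintro rfl; exact hbw hab.symm
      · rintro rfl; exact hav hab
      · rintro rfl; exact haw hab
    · exact ⟨SimpleGraph.Coloring.mk (fun _ => (0 : Fin 3)) fun {v w} h => (he ⟨v, w, h⟩).elim⟩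
  exact ⟨(h3.mono (by omega)).chromaticNumber_le, fun _ => h3⟩
end
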